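/- arXiv:math/0306354 — 5 statements merged into one kernel-verified Lean document; each statement's English description precedes it below -/
import Mathlib

section
/- The following are equivalent: (i) π is surjective onto the unit circle S¹; (ii) for every k ≥ 1 and all distinct words w, w' ∈ {1, …, d}^k one has Σ_{j=1}^{k} n_{w_j} d^{-j} ≠ Σ_{j=1}^{k} n_{w'_j} d^{-j}; (iii) lim_{k→∞} (card{Σ_{j=1}^{k} n_{w_j} d^{-j} : w ∈ {1, …, d}^k})^{1/k} = d; (iv) every fiber π^{-1}(p), p ∈ S¹, is finite; (v) the image of π has positive Haar measure in S¹. (This is the paper's Theorem on suitableness of coding maps, in the case f(z) = z^d.) -/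
open MeasureTheory

/-- The Haar probability measure on the unit circle `S¹ ⊆ ℂ`, realized as the
pushforward of Lebesgue measure on `[0,1)` under `x ↦ exp(2πix)`. -/
noncomputable def circleMeasure : Measure ℂ :=
  Measure.map (fun x : ℝ => Complex.exp (2 * Real.pi * Complex.I * (x : ℂ)))
    (volume.restrict (Set.Ico (0 : ℝ) 1))

/-- The coding map `π : {1,…,d}^ℕ → S¹`, `π(ω) = exp(2πi ∑ₖ n_{ω_k} d^{-k})`. -/
noncomputable def codingMap (d : ℕ) (n : Fin d → ℤ) (ω : ℕ → Fin d) : ℂ :=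
  Complex.exp (2 * Real.pi * Complex.I *
    ((∑' k : ℕ, (n (ω k) : ℝ) / (d : ℝ) ^ (k + 1) : ℝ) : ℂ))

open Filter Topology

namespace CodingMap

/-- The sum `∑_{j < k} n_{w_j} d^{-(j+1)}` attached to a word `w` of length `k`. -/
noncomputable def wordSum {d : ℕ} (n : Fin d → ℤ) {k : ℕ} (w : Fin k → Fin d) : ℝ :=
  ∑ j : Fin k, (n (w j) : ℝ) / (d : ℝ) ^ ((j : ℕ) + 1)

/-- The finite set of all sums attached to words of length `k`. -/
noncomputable def wordSums {d : ℕ} (n : Fin d → ℤ) (k : ℕ) : Finset ℝ :=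
  Finset.univ.image (wordSum n (k := k))

/-- The sum `∑_j n_{ω_j} d^{-(j+1)}` attached to an infinite sequence `ω`. -/
noncomputable def seqSum {d : ℕ} (n : Fin d → ℤ) (ω : ℕ → Fin d) : ℝ :=
  ∑' k : ℕ, (n (ω k) : ℝ) / (d : ℝ) ^ (k + 1)

/-- A common bound for the numbers `|seqSum n ω|`. -/
noncomputable def digitBound {d : ℕ} (n : Fin d → ℤ) : ℝ := ∑ i, |(n i : ℝ)|

variable {d : ℕ} {n : Fin d → ℤ}

lemma digitBound_nonneg : 0 ≤ digitBound n := Finset.sum_nonneg fun _ _ => abs_nonneg _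

lemma norm_term_le (hd : 2 ≤ d) (k : ℕ) (ω : ℕ → Fin d) :
    ‖(n (ω k) : ℝ) / (d : ℝ) ^ (k + 1)‖ ≤ digitBound n / 2 / 2 ^ k := by
  have hd' : (2 : ℝ) ≤ d := by exact_mod_cast hd
  have h1 : |(n (ω k) : ℝ)| ≤ digitBound n :=
    Finset.single_le_sum (f := fun i => |(n i : ℝ)|) (fun _ _ => abs_nonneg _) (Finset.mem_univ _)
  rw [norm_div, norm_pow, Real.norm_natCast, Real.norm_eq_abs, div_div, ← pow_succ']
  have := digitBound_nonneg (n := n)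
  gcongr

lemma summable_terms (hd : 2 ≤ d) (ω : ℕ → Fin d) :
    Summable fun k => (n (ω k) : ℝ) / (d : ℝ) ^ (k + 1) :=
  (hasSum_geometric_two' (digitBound n)).summable.of_norm_bounded fun k => norm_term_le hd k ω

lemma abs_seqSum_le (hd : 2 ≤ d) (ω : ℕ → Fin d) : |seqSum n ω| ≤ digitBound n :=
  tsum_of_norm_bounded (hasSum_geometric_two' (digitBound n)) fun k => norm_term_le hd k ω

lemma continuous_seqSum (hd : 2 ≤ d) : Continuous (seqSum n) := by
  refine continuous_tsum (fun k => ?_) (hasSum_geometric_two' (digitBound n)).summable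
    (fun k ω => norm_term_le hd k ω)
  exact (continuous_of_discreteTopology (f := fun i => (n i : ℝ) / (d : ℝ) ^ (k + 1))).comp
    (continuous_apply k)

lemma isCompact_range_seqSum (hd : 2 ≤ d) : IsCompact (Set.range (seqSum n)) :=
  isCompact_range (continuous_seqSum hd)

lemma wordSum_prefix (k : ℕ) (ω : ℕ → Fin d) :
    wordSum n (fun j : Fin k => ω j) =
      ∑ j ∈ Finset.range k, (n (ω j) : ℝ) / (d : ℝ) ^ (j + 1) :=
  Fin.sum_univ_eq_sum_range (fun j => (n (ω j) : ℝ) / (d : ℝ) ^ (j + 1)) k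

lemma tendsto_wordSum_prefix (hd : 2 ≤ d) (ω : ℕ → Fin d) :
    Tendsto (fun k => wordSum n (fun j : Fin k => ω j)) atTop (𝓝 (seqSum n ω)) := by
  simp only [wordSum_prefix]
  exact (summable_terms hd ω).hasSum.tendsto_sum_nat

lemma seqSum_eq_prefix_add (hd : 2 ≤ d) (k : ℕ) (ω : ℕ → Fin d) :
    seqSum n ω = wordSum n (fun j : Fin k => ω j)
      + seqSum n (fun j => ω (j + k)) / (d : ℝ) ^ k := by
  rw [wordSum_prefix, seqSum, ← (summable_terms hd ω).sum_add_tsum_nat_add k, seqSum,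
    ← tsum_div_const]
  congr 2
  ext j
  rw [div_div, ← pow_add]
  congr 2
  ring

lemma wordSum_append {a b : ℕ} (w : Fin (a + b) → Fin d) :
    wordSum n w = wordSum n (fun j => w (Fin.castAdd b j))
      + wordSum n (fun j => w (Fin.natAdd a j)) / (d : ℝ) ^ a := by
  simp only [wordSum, Fin.sum_univ_add, Finset.sum_div, Fin.val_castAdd, Fin.val_natAdd]
  congr 1
  refine Finset.sum_congr rfl fun j _ => ?_
  rw [div_div, ← pow_add]
  congr 2
  ring

lemma exists_int_wordSum (hd : 2 ≤ d) {k : ℕ} (w : Fin k → Fin d) :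
    ∃ z : ℤ, wordSum n w = z / (d : ℝ) ^ k := by
  have hd' : (d : ℝ) ≠ 0 := by positivity
  refine ⟨∑ j : Fin k, n (w j) * (d : ℤ) ^ (k - (j + 1)), ?_⟩
  push_cast
  rw [wordSum, Finset.sum_div]
  refine Finset.sum_congr rfl fun j _ => ?_
  have : (d : ℝ) ^ k = (d : ℝ) ^ (k - ((j : ℕ) + 1)) * (d : ℝ) ^ ((j : ℕ) + 1) := by
    rw [← pow_add]
    congr 1
    omega
  rw [this]
  field_simp

lemma card_wordSums_mul_le (k m : ℕ) :
    (wordSums n (k * m)).card ≤ (wordSums n k).card ^ m := by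
  induction m with
  | zero =>
    refine Finset.card_image_le.trans ?_
    simp
  | succ m ih =>
    have hsub : wordSums n (k * m + k) ⊆ Finset.image₂ (fun x y => x + y / (d : ℝ) ^ (k * m))
        (wordSums n (k * m)) (wordSums n k) := by
      intro s hs
      obtain ⟨w, -, rfl⟩ := Finset.mem_image.1 hs
      rw [wordSum_append]
      exact Finset.mem_image₂_of_mem (Finset.mem_image_of_mem _ (Finset.mem_univ _))
        (Finset.mem_image_of_mem _ (Finset.mem_univ _))
    rw [mul_add, mul_one, pow_succ]
    exact (Finset.card_le_card hsub).trans
      ((Finset.card_image₂_le _ _ _).trans (Nat.mul_le_mul_right _ ih))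

lemma card_wordSums_of_injective {k : ℕ}
    (h : Function.Injective (wordSum n (k := k))) : (wordSums n k).card = d ^ k := by
  rw [wordSums, Finset.card_image_of_injective _ h]
  simp

lemma card_wordSums_lt_of_not_injective {k : ℕ}
    (h : ¬ Function.Injective (wordSum n (k := k))) : (wordSums n k).card < d ^ k := by
  have hle : (wordSums n k).card ≤ (Finset.univ : Finset (Fin k → Fin d)).card :=
    Finset.card_image_le
  have hne : (wordSums n k).card ≠ (Finset.univ : Finset (Fin k → Fin d)).card := fun he =>
    h fun a b hab => Finset.card_image_iff.1 he (by simp) (by simp) hab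
  simpa using lt_of_le_of_ne hle hne

/-! ### Growth of the number of word sums -/

lemma tendsto_card_rpow_of_injective
    (h : ∀ k, Function.Injective (wordSum n (k := k))) :
    Tendsto (fun k : ℕ => ((wordSums n k).card : ℝ) ^ ((k : ℝ)⁻¹)) atTop (𝓝 (d : ℝ)) := by
  refine tendsto_const_nhds.congr' ?_
  filter_upwards [eventually_ne_atTop 0] with k hk
  rw [card_wordSums_of_injective (h k), Nat.cast_pow,
    Real.pow_rpow_inv_natCast (Nat.cast_nonneg d) hk]

lemma injective_of_tendsto_card_rpow {k : ℕ} (hk : k ≠ 0)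
    (h : Tendsto (fun k : ℕ => ((wordSums n k).card : ℝ) ^ ((k : ℝ)⁻¹)) atTop (𝓝 (d : ℝ))) :
    Function.Injective (wordSum n (k := k)) := by
  by_contra hinj
  have hlt : ((wordSums n k).card : ℝ) < (d : ℝ) ^ k := by
    exact_mod_cast card_wordSums_lt_of_not_injective hinj
  have hsub : Tendsto (fun m : ℕ => k * m) atTop atTop :=
    tendsto_id.const_mul_atTop' (Nat.pos_of_ne_zero hk)
  have hle : (d : ℝ) ≤ ((wordSums n k).card : ℝ) ^ ((k : ℝ)⁻¹) := by
    refine le_of_tendsto (h.comp hsub) ?_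
    filter_upwards [eventually_ne_atTop 0] with m hm
    calc ((wordSums n (k * m)).card : ℝ) ^ (((k * m : ℕ) : ℝ)⁻¹)
        ≤ (((wordSums n k).card : ℝ) ^ m) ^ (((k * m : ℕ) : ℝ)⁻¹) := by
          gcongr
          exact_mod_cast card_wordSums_mul_le k m
      _ = ((wordSums n k).card : ℝ) ^ ((k : ℝ)⁻¹) := by
          rw [← Real.rpow_natCast, ← Real.rpow_mul (Nat.cast_nonneg _)]
          congr 1
          have : (m : ℝ) ≠ 0 := by exact_mod_cast hm
          have : (k : ℝ) ≠ 0 := by exact_mod_cast hk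
          push_cast
          field_simp
  have hpow := pow_le_pow_left₀ (Nat.cast_nonneg d) hle k
  rw [Real.rpow_inv_natCast_pow (Nat.cast_nonneg _) hk] at hpow
  exact hpow.not_gt hlt

/-! ### Lebesgue measure of the set of sums -/

lemma volume_range_seqSum_le (hd : 2 ≤ d) (k : ℕ) :
    volume (Set.range (seqSum n)) ≤
      ENNReal.ofReal ((wordSums n k).card / (d : ℝ) ^ k * (2 * digitBound n)) := by
  have hsub : Set.range (seqSum n) ⊆
      ⋃ s ∈ wordSums n k, Metric.closedBall s (digitBound n / (d : ℝ) ^ k) := by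
    rintro _ ⟨ω, rfl⟩
    refine Set.mem_iUnion₂.2
      ⟨wordSum n (fun j : Fin k => ω j), Finset.mem_image_of_mem _ (Finset.mem_univ _), ?_⟩
    rw [Metric.mem_closedBall, Real.dist_eq, seqSum_eq_prefix_add hd k ω, add_sub_cancel_left,
      abs_div, abs_of_nonneg (by positivity : (0 : ℝ) ≤ (d : ℝ) ^ k)]
    gcongr
    exact abs_seqSum_le hd _
  refine (measure_mono hsub).trans ((measure_biUnion_finset_le _ _).trans ?_)
  simp only [Real.volume_closedBall, Finset.sum_const, nsmul_eq_mul]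
  rw [← ENNReal.ofReal_natCast, ← ENNReal.ofReal_mul (Nat.cast_nonneg _)]
  apply le_of_eq
  congr 1
  ring

lemma volume_range_seqSum_eq_zero (hd : 2 ≤ d) {k : ℕ}
    (h : ¬ Function.Injective (wordSum n (k := k))) : volume (Set.range (seqSum n)) = 0 := by
  have hdk : (0 : ℝ) < (d : ℝ) ^ k := by positivity
  set r : ℝ := (wordSums n k).card / (d : ℝ) ^ k with hr
  have hr0 : 0 ≤ r := by positivity
  have hr1 : r < 1 := by
    rw [hr, div_lt_one hdk]
    exact_mod_cast card_wordSums_lt_of_not_injective h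
  have hlim : Tendsto (fun m : ℕ => ENNReal.ofReal (r ^ m * (2 * digitBound n))) atTop (𝓝 0) := by
    have := (tendsto_pow_atTop_nhds_zero_of_lt_one hr0 hr1).mul_const (2 * digitBound n)
    simpa using ENNReal.tendsto_ofReal this
  refine le_antisymm (ge_of_tendsto' hlim fun m => ?_) zero_le
  refine (volume_range_seqSum_le hd (k * m)).trans (ENNReal.ofReal_le_ofReal ?_)
  have := digitBound_nonneg (n := n)
  gcongr
  rw [hr, div_pow, ← pow_mul]
  gcongr
  exact_mod_cast card_wordSums_mul_le k m

lemma one_le_volume_cthickening (hd : 2 ≤ d) {k : ℕ}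
    (h : Function.Injective (wordSum n (k := k))) :
    1 ≤ volume (Metric.cthickening ((digitBound n + 1) / (d : ℝ) ^ k)
      (Set.range (seqSum n))) := by
  have hdk : (0 : ℝ) < (d : ℝ) ^ k := by positivity
  have hsub : (⋃ s ∈ wordSums n k, Set.Ico s (s + 1 / (d : ℝ) ^ k)) ⊆
      Metric.cthickening ((digitBound n + 1) / (d : ℝ) ^ k) (Set.range (seqSum n)) := by
    refine Set.iUnion₂_subset fun s hs x hx => ?_
    obtain ⟨w, -, rfl⟩ := Finset.mem_image.1 hs
    let ω : ℕ → Fin d := fun j => if hj : j < k then w ⟨j, hj⟩ else ⟨0, by omega⟩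
    have hω : (fun j : Fin k => ω j) = w := by
      ext j
      simp [ω]
    refine Metric.mem_cthickening_of_dist_le x (seqSum n ω) _ _ ⟨ω, rfl⟩ ?_
    have hb := abs_seqSum_le (n := n) hd (fun j => ω (j + k))
    rw [Real.dist_eq, seqSum_eq_prefix_add hd k ω, hω, ← sub_sub]
    refine (abs_sub _ _).trans ?_
    rw [abs_div, abs_of_pos hdk, abs_of_nonneg (sub_nonneg.2 hx.1), add_comm (digitBound n),
      add_div]
    gcongr
    linarith [hx.2]
  refine le_trans (le_of_eq ?_) (measure_mono hsub)
  rw [measure_biUnion_finset]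
  · simp only [Real.volume_Ico, add_sub_cancel_left, Finset.sum_const, nsmul_eq_mul]
    rw [card_wordSums_of_injective h, ← ENNReal.ofReal_natCast,
      ← ENNReal.ofReal_mul (Nat.cast_nonneg _), Nat.cast_pow, mul_one_div_cancel hdk.ne',
      ENNReal.ofReal_one]
  · intro s hs t ht hst
    obtain ⟨w, -, rfl⟩ := Finset.mem_image.1 hs
    obtain ⟨w', -, rfl⟩ := Finset.mem_image.1 ht
    obtain ⟨a, ha⟩ := exists_int_wordSum (n := n) hd w
    obtain ⟨b, hb⟩ := exists_int_wordSum (n := n) hd w'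
    rw [ha, hb] at hst
    refine Set.disjoint_left.2 fun x hx hx' => hst ?_
    beta_reduce at hx hx'
    rw [ha, ← add_div, Set.mem_Ico, div_le_iff₀ hdk, lt_div_iff₀ hdk] at hx
    rw [hb, ← add_div, Set.mem_Ico, div_le_iff₀ hdk, lt_div_iff₀ hdk] at hx'
    have h1 : (a : ℝ) < b + 1 := hx.1.trans_lt hx'.2
    have h2 : (b : ℝ) < a + 1 := hx'.1.trans_lt hx.2
    norm_cast at h1 h2
    rw [show a = b by omega]
  · exact fun _ _ => measurableSet_Ico

lemma one_le_volume_range_seqSum (hd : 2 ≤ d)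
    (h : ∀ k, Function.Injective (wordSum n (k := k))) :
    1 ≤ volume (Set.range (seqSum n)) := by
  have hd1 : (1 : ℝ) < d := by exact_mod_cast hd
  have hlim : Tendsto (fun k : ℕ => (digitBound n + 1) / (d : ℝ) ^ k) atTop (𝓝 0) :=
    tendsto_const_nhds.div_atTop (tendsto_pow_atTop_atTop_of_one_lt hd1)
  exact ge_of_tendsto'
    ((tendsto_measure_cthickening_of_isCompact (isCompact_range_seqSum hd)).comp hlim)
    fun k => one_le_volume_cthickening hd (h k)

/-! ### Finiteness of the fibers -/

lemma exists_prefix_injOn (F : Finset (ℕ → Fin d)) :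
    ∃ k : ℕ, Set.InjOn (fun (ω : ℕ → Fin d) (j : Fin k) => ω j) F := by
  have h : ∀ᶠ k : ℕ in atTop, ∀ a ∈ F, ∀ b ∈ F,
      (fun j : Fin k => a j) = (fun j : Fin k => b j) → a = b := by
    refine (Finset.eventually_all F).2 fun a _ => (Finset.eventually_all F).2 fun b _ => ?_
    by_cases hab : a = b
    · exact Eventually.of_forall fun _ _ => hab
    · obtain ⟨j, hj⟩ := Function.ne_iff.1 hab
      filter_upwards [eventually_gt_atTop j] with k hk he
      exact absurd (congrFun he ⟨j, hk⟩) hj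
  obtain ⟨k, hk⟩ := h.exists
  exact ⟨k, fun a ha b hb => hk a ha b hb⟩

lemma finite_seqSum_fiber (hd : 2 ≤ d)
    (h : ∀ k, Function.Injective (wordSum n (k := k))) (y : ℝ) :
    {ω | seqSum n ω = y}.Finite := by
  by_contra hinf
  set C := digitBound n
  obtain ⟨F, hF, hcard⟩ :=
    Set.Infinite.exists_subset_card_eq hinf (⌊2 * C⌋ + 2).toNat
  obtain ⟨k, hk⟩ := exists_prefix_injOn F
  have hdk : (0 : ℝ) < (d : ℝ) ^ k := by positivity
  have hC : 0 ≤ C := digitBound_nonneg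
  choose z hz using fun w : Fin k → Fin d => exists_int_wordSum (n := n) hd w
  let g : (ℕ → Fin d) → ℤ := fun ω => z fun j : Fin k => ω j
  have hg : Set.InjOn g F := by
    intro a ha b hb hab
    refine hk ha hb (h k ?_)
    rw [hz, hz]
    exact congrArg (fun i : ℤ => (i : ℝ) / (d : ℝ) ^ k) hab
  have hmaps : Set.MapsTo g F
      (Finset.Icc ⌈y * (d : ℝ) ^ k - C⌉ ⌊y * (d : ℝ) ^ k + C⌋) := by
    intro ω hω
    have hy : seqSum n ω = y := hF hω
    rw [seqSum_eq_prefix_add hd k, hz, ← add_div, div_eq_iff hdk.ne'] at hy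
    have hb := abs_le.1 (abs_seqSum_le (n := n) hd fun j => ω (j + k))
    rw [Finset.coe_Icc, Set.mem_Icc, Int.ceil_le, Int.le_floor, ← hy]
    constructor <;> linarith [hb.1, hb.2]
  have hle := Finset.card_le_card_of_injOn g hmaps hg
  have hfl : ⌊y * (d : ℝ) ^ k + C⌋ - ⌈y * (d : ℝ) ^ k - C⌉ ≤ ⌊2 * C⌋ := by
    rw [Int.le_floor]
    push_cast
    linarith [Int.floor_le (y * (d : ℝ) ^ k + C), Int.le_ceil (y * (d : ℝ) ^ k - C)]
  have h0 : 0 ≤ ⌊2 * C⌋ := Int.floor_nonneg.2 (by positivity)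
  rw [hcard, Int.card_Icc] at hle
  omega

lemma codingMap_eq_iff (ω ω' : ℕ → Fin d) :
    codingMap d n ω = codingMap d n ω' ↔ ∃ m : ℤ, seqSum n ω = seqSum n ω' + m := by
  change Complex.exp (2 * Real.pi * Complex.I * (seqSum n ω : ℂ)) =
    Complex.exp (2 * Real.pi * Complex.I * (seqSum n ω' : ℂ)) ↔ _
  rw [Complex.exp_eq_exp_iff_exists_int]
  refine exists_congr fun m => ?_
  rw [mul_comm (m : ℂ), ← mul_add, mul_right_inj' Complex.two_pi_I_ne_zero]
  norm_cast

lemma finite_codingMap_fiber (hd : 2 ≤ d)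
    (h : ∀ k, Function.Injective (wordSum n (k := k))) (p : ℂ) :
    {ω : ℕ → Fin d | codingMap d n ω = p}.Finite := by
  rcases Set.eq_empty_or_nonempty {ω : ℕ → Fin d | codingMap d n ω = p} with he | ⟨ω₀, hω₀⟩
  · rw [he]
    exact Set.finite_empty
  · set C := digitBound n
    refine ((Finset.Icc ⌈-(2 * C)⌉ ⌊2 * C⌋).finite_toSet.biUnion fun m _ =>
      finite_seqSum_fiber hd h (seqSum n ω₀ + m)).subset fun ω hω => ?_
    obtain ⟨m, hm⟩ := (codingMap_eq_iff ω ω₀).1 (hω.trans hω₀.symm)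
    refine Set.mem_iUnion₂.2 ⟨m, ?_, hm⟩
    have h1 := abs_le.1 (abs_seqSum_le (n := n) hd ω)
    have h2 := abs_le.1 (abs_seqSum_le (n := n) hd ω₀)
    rw [Finset.coe_Icc, Set.mem_Icc, Int.ceil_le, Int.le_floor]
    constructor <;> linarith [h1.1, h1.2, h2.1, h2.2]

/-- The sequence obtained by concatenating copies of the words `w` and `w'` as told by `c`. -/
def concatSeq {k : ℕ} (hk : 0 < k) (w w' : Fin k → Fin d) (c : ℕ → Bool) (i : ℕ) : Fin d :=
  (if c (i / k) then w else w') ⟨i % k, Nat.mod_lt i hk⟩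

lemma concatSeq_mul_add {k : ℕ} (hk : 0 < k) (w w' : Fin k → Fin d) (c : ℕ → Bool) (m : ℕ)
    (j : Fin k) : concatSeq hk w w' c (k * m + j) = (if c m then w else w') j := by
  have h1 : (k * m + j) / k = m := by
    rw [Nat.mul_add_div hk, Nat.div_eq_of_lt j.2, add_zero]
  have h2 : (k * m + j) % k = j := by
    rw [Nat.mul_add_mod, Nat.mod_eq_of_lt j.2]
  simp only [concatSeq, h1, h2]

lemma concatSeq_injective {k : ℕ} (hk : 0 < k) {w w' : Fin k → Fin d} (hne : w ≠ w') :
    Function.Injective (concatSeq hk w w') := by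
  intro c c' hc
  ext m
  have h : (if c m then w else w') = (if c' m then w else w') := by
    ext j
    rw [← concatSeq_mul_add hk w w' c m j, hc, concatSeq_mul_add]
  cases hcm : c m <;> cases hcm' : c' m <;> simp_all

lemma seqSum_concatSeq (hd : 2 ≤ d) {k : ℕ} (hk : 0 < k) {w w' : Fin k → Fin d}
    (hw : wordSum n w = wordSum n w') (c c' : ℕ → Bool) :
    seqSum n (concatSeq hk w w' c) = seqSum n (concatSeq hk w w' c') := by
  have hpre : ∀ m, wordSum n (fun j : Fin (k * m) => concatSeq hk w w' c j) =
      wordSum n (fun j : Fin (k * m) => concatSeq hk w w' c' j) := by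
    intro m
    induction m with
    | zero => simp [wordSum]
    | succ m ih =>
      change wordSum n (fun j : Fin (k * m + k) => concatSeq hk w w' c j) =
        wordSum n (fun j : Fin (k * m + k) => concatSeq hk w w' c' j)
      have hblock : ∀ b : Bool, wordSum n (if b then w else w') = wordSum n w' := by
        intro b
        cases b <;> simp [hw]
      rw [wordSum_append, wordSum_append (w := fun j : Fin (k * m + k) => concatSeq hk w w' c' j)]
      simp only [Fin.val_castAdd, Fin.val_natAdd, concatSeq_mul_add, ih, hblock]
  have hsub : Tendsto (fun m : ℕ => k * m) atTop atTop := tendsto_id.const_mul_atTop' hk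
  refine tendsto_nhds_unique ((tendsto_wordSum_prefix hd _).comp hsub) ?_
  refine ((tendsto_wordSum_prefix hd _).comp hsub).congr fun m => ?_
  exact (hpre m).symm

lemma injective_of_finite_fibers (hd : 2 ≤ d)
    (h : ∀ p : ℂ, {ω : ℕ → Fin d | codingMap d n ω = p}.Finite) {k : ℕ} (hk : 0 < k) :
    Function.Injective (wordSum n (k := k)) := by
  intro w w' hw
  by_contra hne
  refine Set.infinite_range_of_injective (concatSeq_injective hk hne)
    ((h (codingMap d n (concatSeq hk w w' fun _ => true))).subset ?_)
  rintro _ ⟨c, rfl⟩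
  refine (codingMap_eq_iff _ _).2 ⟨0, ?_⟩
  rw [Int.cast_zero, add_zero, seqSum_concatSeq hd hk hw]

/-! ### Transfer to the additive circle -/

/-- The image of the set of sums in `ℝ / ℤ`. -/
def sumsModOne (n : Fin d → ℤ) : Set UnitAddCircle :=
  (QuotientAddGroup.mk : ℝ → UnitAddCircle) '' Set.range (seqSum n)

lemma coe_toCircle_mk (x : ℝ) : (AddCircle.toCircle (x : UnitAddCircle) : ℂ) =
    Complex.exp (2 * Real.pi * Complex.I * (x : ℂ)) := by
  rw [AddCircle.toCircle_apply_mk, Circle.coe_exp]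
  push_cast
  congr 1
  ring

lemma continuous_coe_toCircle :
    Continuous fun y : UnitAddCircle => (AddCircle.toCircle y : ℂ) :=
  continuous_subtype_val.comp AddCircle.continuous_toCircle

lemma circleMeasure_eq_map :
    circleMeasure = Measure.map (fun y : UnitAddCircle => (AddCircle.toCircle y : ℂ)) volume := by
  rw [← (UnitAddCircle.measurePreserving_mk 0).map_eq, Measure.map_map
    continuous_coe_toCircle.measurable AddCircle.measurable_mk', circleMeasure, zero_add,
    Measure.restrict_congr_set Ico_ae_eq_Ioc]
  congr 1
  ext x
  exact (coe_toCircle_mk x).symm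

lemma range_codingMap :
    Set.range (codingMap d n) =
      (fun y : UnitAddCircle => (AddCircle.toCircle y : ℂ)) '' sumsModOne n := by
  rw [sumsModOne, ← Set.range_comp, ← Set.range_comp]
  congr 1
  ext ω
  exact (coe_toCircle_mk (seqSum n ω)).symm

lemma isCompact_sumsModOne (hd : 2 ≤ d) : IsCompact (sumsModOne n) :=
  (isCompact_range_seqSum hd).image (AddCircle.continuous_mk' 1)

lemma circleMeasure_range_codingMap (hd : 2 ≤ d) :
    circleMeasure (Set.range (codingMap d n)) = volume (sumsModOne n) := by
  have hinj : Function.Injective fun y : UnitAddCircle => (AddCircle.toCircle y : ℂ) :=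
    Subtype.val_injective.comp (AddCircle.injective_toCircle one_ne_zero)
  rw [range_codingMap, circleMeasure_eq_map, Measure.map_apply continuous_coe_toCircle.measurable
    ((isCompact_sumsModOne hd).image continuous_coe_toCircle).measurableSet,
    Set.preimage_image_eq _ hinj]

lemma circleMeasure_sphere : circleMeasure (Metric.sphere (0 : ℂ) 1) = 1 := by
  have hpre : (fun y : UnitAddCircle => (AddCircle.toCircle y : ℂ)) ⁻¹' Metric.sphere (0 : ℂ) 1 =
      Set.univ :=
    Set.eq_univ_of_forall fun y => mem_sphere_zero_iff_norm.2 (Circle.norm_coe _)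
  rw [circleMeasure_eq_map, Measure.map_apply continuous_coe_toCircle.measurable
    Metric.isClosed_sphere.measurableSet, hpre, UnitAddCircle.measure_univ]

/-- A compact subset of `ℝ` is Lebesgue null iff its image in `ℝ / ℤ` is null. -/
lemma volume_image_mk_eq_zero_iff {K : Set ℝ} (hK : IsCompact K) :
    volume ((QuotientAddGroup.mk : ℝ → UnitAddCircle) '' K) = 0 ↔ volume K = 0 := by
  set E := (QuotientAddGroup.mk : ℝ → UnitAddCircle) '' K with hE
  have hEm : MeasurableSet E := (hK.image (AddCircle.continuous_mk' 1)).measurableSet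
  have hpre : ∀ t : ℝ, volume E =
      volume ((QuotientAddGroup.mk : ℝ → UnitAddCircle) ⁻¹' E ∩ Set.Ioc t (t + 1)) := fun t => by
    rw [← (UnitAddCircle.measurePreserving_mk t).measure_preimage hEm.nullMeasurableSet,
      Measure.restrict_apply (AddCircle.measurable_mk' hEm)]
  constructor
  · intro h0
    have hcover : K ⊆ ⋃ m : ℤ,
        (QuotientAddGroup.mk : ℝ → UnitAddCircle) ⁻¹' E ∩ Set.Ioc (m : ℝ) (m + 1) := by
      intro x hx
      refine Set.mem_iUnion.2 ⟨⌈x⌉ - 1, ⟨x, hx, rfl⟩, ?_, ?_⟩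
      · push_cast
        linarith [Int.ceil_lt_add_one x]
      · push_cast
        linarith [Int.le_ceil x]
    refine measure_mono_null hcover (measure_iUnion_null fun m => ?_)
    rw [← hpre, h0]
  · intro h0
    rw [hpre 0]
    refine measure_mono_null Set.inter_subset_left ?_
    rw [hE, QuotientAddGroup.preimage_image_mk_eq_iUnion_image]
    have : Countable (AddSubgroup.zmultiples (1 : ℝ)) :=
      (Set.countable_range fun m : ℤ => m • (1 : ℝ)).to_subtype
    refine measure_iUnion_null fun x => ?_
    rw [Set.image_add_right, measure_preimage_add_right, h0]

lemma nsmul_mem_sumsModOne (hd : 2 ≤ d) {y : UnitAddCircle} (hy : y ∈ sumsModOne n) :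
    d • y ∈ sumsModOne n := by
  obtain ⟨_, ⟨ω, rfl⟩, rfl⟩ := hy
  refine ⟨_, ⟨fun j => ω (j + 1), rfl⟩, ?_⟩
  have hd' : (d : ℝ) ≠ 0 := by positivity
  have h : d • seqSum n ω = seqSum n (fun j => ω (j + 1)) + n (ω 0) • (1 : ℝ) := by
    rw [seqSum_eq_prefix_add hd 1 ω]
    simp only [wordSum, Fin.sum_univ_one, Fin.val_zero, zero_add, pow_one, nsmul_eq_mul,
      zsmul_eq_mul, mul_one]
    field_simp
    ring
  rw [← QuotientAddGroup.mk_nsmul, h]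
  refine (QuotientAddGroup.mk_add_of_mem _ ?_).symm
  exact AddSubgroup.zsmul_mem_zmultiples _ _

lemma sumsModOne_eq_univ (hd : 2 ≤ d) (h : 0 < volume (sumsModOne n)) :
    sumsModOne n = Set.univ := by
  have hcl : IsClosed (sumsModOne n) := (isCompact_sumsModOne hd).isClosed
  have herg : Ergodic (fun y : UnitAddCircle => d • y) volume := AddCircle.ergodic_nsmul hd
  rcases herg.ae_empty_or_univ_of_ae_le_preimage hcl.measurableSet.nullMeasurableSet
    (Eventually.of_forall fun y => nsmul_mem_sumsModOne hd) with h0 | h1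
  · exact absurd (measure_congr h0) (by simpa using h.ne')
  · have := (hcl.isOpen_compl.measure_eq_zero_iff volume).1 (ae_eq_univ.1 h1)
    exact Set.compl_empty_iff.1 this

lemma range_codingMap_eq_sphere (hd : 2 ≤ d)
    (h : 0 < circleMeasure (Set.range (codingMap d n))) :
    Set.range (codingMap d n) = Metric.sphere (0 : ℂ) 1 := by
  rw [circleMeasure_range_codingMap hd] at h
  rw [range_codingMap, sumsModOne_eq_univ hd h, Set.image_univ]
  ext z
  constructor
  · rintro ⟨y, rfl⟩
    exact mem_sphere_zero_iff_norm.2 (Circle.norm_coe _)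
  · intro hz
    obtain ⟨y, hy⟩ := (AddCircle.homeomorphCircle one_ne_zero).surjective
      (⟨z, hz⟩ : Circle)
    rw [AddCircle.homeomorphCircle_apply] at hy
    exact ⟨y, congrArg Subtype.val hy⟩

lemma circleMeasure_range_pos_iff (hd : 2 ≤ d) :
    0 < circleMeasure (Set.range (codingMap d n)) ↔ volume (Set.range (seqSum n)) ≠ 0 := by
  rw [circleMeasure_range_codingMap hd, pos_iff_ne_zero, sumsModOne, Ne, Ne,
    volume_image_mk_eq_zero_iff (isCompact_range_seqSum hd)]

lemma injective_wordSum_zero : Function.Injective (wordSum n (k := 0)) :=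
  Function.injective_of_subsingleton _

end CodingMap


/-- Suitableness of the coding map for `f(z) = z^d`: the following are
equivalent: (i) `π` is onto the unit circle; (ii) distinct finite words give
distinct partial sums; (iii) the number of partial sums of length `k` grows
like `d^k`; (iv) all fibers of `π` are finite; (v) the image of `π` has
positive Haar measure. -/
theorem coding_map_suitable_tfae (d : ℕ) (hd : 2 ≤ d) (n : Fin d → ℤ) :
    List.TFAE
      [ Set.range (codingMap d n) = Metric.sphere (0 : ℂ) 1,
        ∀ k : ℕ, 1 ≤ k → ∀ w w' : Fin k → Fin d, w ≠ w' →
          (∑ j : Fin k, (n (w j) : ℝ) / (d : ℝ) ^ ((j : ℕ) + 1)) ≠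
            (∑ j : Fin k, (n (w' j) : ℝ) / (d : ℝ) ^ ((j : ℕ) + 1)),
        Filter.Tendsto (fun k : ℕ =>
          ((Set.ncard {s : ℝ | ∃ w : Fin k → Fin d,
              s = ∑ j : Fin k, (n (w j) : ℝ) / (d : ℝ) ^ ((j : ℕ) + 1)} : ℝ))
            ^ ((k : ℝ)⁻¹))
          Filter.atTop (nhds (d : ℝ)),
        ∀ p : ℂ, {ω : ℕ → Fin d | codingMap d n ω = p}.Finite,
        0 < circleMeasure (Set.range (codingMap d n)) ] := by
  have hset : ∀ k : ℕ, {s : ℝ | ∃ w : Fin k → Fin d,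
      s = ∑ j : Fin k, (n (w j) : ℝ) / (d : ℝ) ^ ((j : ℕ) + 1)} =
      (CodingMap.wordSums n k : Set ℝ) := by
    intro k
    ext s
    simp [CodingMap.wordSums, CodingMap.wordSum, eq_comm]
  simp only [hset, Set.ncard_coe_finset]
  have hinj : (∀ k : ℕ, 1 ≤ k → ∀ w w' : Fin k → Fin d, w ≠ w' →
      CodingMap.wordSum n w ≠ CodingMap.wordSum n w') ↔
      ∀ k, Function.Injective (CodingMap.wordSum n (k := k)) := by
    constructor
    · intro h k
      rcases Nat.eq_zero_or_pos k with rfl | hk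
      · exact CodingMap.injective_wordSum_zero
      · exact fun w w' hw => not_imp_not.1 (h k hk w w') hw
    · exact fun h k _ w w' hne => (h k).ne hne
  tfae_have 1 → 5 := fun h => by
    rw [h, CodingMap.circleMeasure_sphere]
    exact one_pos
  tfae_have 5 → 1 := CodingMap.range_codingMap_eq_sphere hd
  tfae_have 2 → 5 := fun h => (CodingMap.circleMeasure_range_pos_iff hd).2
    (one_pos.trans_le (CodingMap.one_le_volume_range_seqSum hd (hinj.1 h))).ne'
  tfae_have 5 → 2 := fun h => hinj.2 fun k => by
    by_contra hk
    exact (CodingMap.circleMeasure_range_pos_iff hd).1 h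
      (CodingMap.volume_range_seqSum_eq_zero hd hk)
  tfae_have 2 → 3 := fun h => CodingMap.tendsto_card_rpow_of_injective (hinj.1 h)
  tfae_have 3 → 2 := fun h k hk w w' hne =>
    (CodingMap.injective_of_tendsto_card_rpow (by omega) h).ne hne
  tfae_have 2 → 4 := fun h => CodingMap.finite_codingMap_fiber hd (hinj.1 h)
  tfae_have 4 → 2 := fun h k hk w w' hne =>
    (CodingMap.injective_of_finite_fibers hd h hk).ne hne
  tfae_finish
end

section
/- If π is surjective onto the unit circle, then the pushforward under π of the uniform Bernoulli measure m on Σ (the infinite product over ℕ of the uniform probability measure on {1, …, d}) equals the Haar probability measure on the circle. (Instance, for f(z) = z^d, of the paper's corollary that the equilibrium measure μ equals π_*(m) whenever π(Σ) = J.) -/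
open MeasureTheory

open Filter Topology
open scoped FourierTransform

/-- The real number `∑ₖ n_{ω_k} d^{-k}` coded by `ω`. -/
noncomputable def digitSum (d : ℕ) (n : Fin d → ℤ) (ω : ℕ → Fin d) : ℝ :=
  ∑' k : ℕ, (n (ω k) : ℝ) / (d : ℝ) ^ (k + 1)

/-- The trigonometric polynomial `d⁻¹ ∑ᵢ exp(2πi nᵢ t)`. -/
noncomputable def digitMask (d : ℕ) (n : Fin d → ℤ) (t : ℝ) : ℂ :=
  (d : ℂ)⁻¹ * ∑ i, (𝐞 (t * n i) : ℂ)

/-- The Fourier transform of Lebesgue measure restricted to `K`. -/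
noncomputable def setTransform (K : Set ℝ) (t : ℝ) : ℂ :=
  ∫ x in K, (𝐞 (t * x) : ℂ)

theorem exists_abs_digit_le (d : ℕ) (n : Fin d → ℤ) : ∃ C : ℝ, ∀ i, |(n i : ℝ)| ≤ C := by
  obtain ⟨C, hC⟩ := (Set.finite_range fun i => |(n i : ℝ)|).bddAbove
  exact ⟨C, fun i => hC ⟨i, rfl⟩⟩

theorem summable_const_div_pow {d : ℕ} (hd : 2 ≤ d) (C : ℝ) :
    Summable fun k : ℕ => C / (d : ℝ) ^ (k + 1) := by
  have hd' : (1 : ℝ) < d := by exact_mod_cast hd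
  have h := (summable_geometric_of_lt_one (by positivity) (inv_lt_one_of_one_lt₀ hd')).mul_left
    (C * (d : ℝ)⁻¹)
  refine h.congr fun k => ?_
  rw [inv_pow, pow_succ]
  field_simp

theorem norm_digit_div_le {d : ℕ} {n : Fin d → ℤ} {C : ℝ} (hC : ∀ i, |(n i : ℝ)| ≤ C)
    (k : ℕ) (i : Fin d) : ‖(n i : ℝ) / (d : ℝ) ^ (k + 1)‖ ≤ C / (d : ℝ) ^ (k + 1) := by
  rw [norm_div, Real.norm_eq_abs, norm_pow, Real.norm_natCast]
  gcongr
  exact hC i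

theorem summable_digits {d : ℕ} (hd : 2 ≤ d) (n : Fin d → ℤ) (ω : ℕ → Fin d) :
    Summable fun k : ℕ => (n (ω k) : ℝ) / (d : ℝ) ^ (k + 1) := by
  obtain ⟨C, hC⟩ := exists_abs_digit_le d n
  exact (summable_const_div_pow hd C).of_norm_bounded fun k => norm_digit_div_le hC k _

theorem continuous_digitSum {d : ℕ} (hd : 2 ≤ d) (n : Fin d → ℤ) :
    Continuous (digitSum d n) := by
  obtain ⟨C, hC⟩ := exists_abs_digit_le d n
  refine continuous_tsum (fun k => ?_) (summable_const_div_pow hd C)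
    fun k ω => norm_digit_div_le hC k _
  exact ((continuous_of_discreteTopology (f := fun i : Fin d => (n i : ℝ))).comp
    (continuous_apply k)).div_const _

theorem digitSum_eq_shift {d : ℕ} (hd : 2 ≤ d) (n : Fin d → ℤ) (ω : ℕ → Fin d) :
    digitSum d n ω = (digitSum d n (fun k => ω (k + 1)) + n (ω 0)) / d := by
  have hd' : (d : ℝ) ≠ 0 := by positivity
  unfold digitSum
  rw [(summable_digits hd n ω).tsum_eq_zero_add, add_div, add_comm, ← tsum_div_const]
  congr 1
  · exact tsum_congr fun k => by rw [div_div, ← pow_succ]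
  · simp

theorem range_digitSum_eq_iUnion {d : ℕ} (hd : 2 ≤ d) (n : Fin d → ℤ) :
    Set.range (digitSum d n) =
      ⋃ i, (fun x : ℝ => (x + n i) / d) '' Set.range (digitSum d n) := by
  ext y
  simp only [Set.mem_iUnion, Set.mem_image, Set.mem_range]
  constructor
  · rintro ⟨ω, rfl⟩
    exact ⟨ω 0, _, ⟨_, rfl⟩, (digitSum_eq_shift hd n ω).symm⟩
  · rintro ⟨i, _, ⟨ω, rfl⟩, rfl⟩
    refine ⟨fun k => Nat.casesOn k i ω, ?_⟩
    exact digitSum_eq_shift hd n _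

section Contraction

variable {d : ℕ} {K : Set ℝ}

theorem hasDerivWithinAt_add_div (c : ℝ) (x : ℝ) :
    HasDerivWithinAt (fun x : ℝ => (x + c) / d) ((d : ℝ)⁻¹) K x := by
  simpa using (((hasDerivAt_id x).add_const c).div_const (d : ℝ)).hasDerivWithinAt (s := K)

theorem injOn_add_div (hd : d ≠ 0) (c : ℝ) : Set.InjOn (fun x : ℝ => (x + c) / d) K := by
  have hd' : (d : ℝ) ≠ 0 := by positivity
  intro x _ y _ h
  simpa [div_left_inj' hd'] using h

theorem volume_image_add_div (hd : d ≠ 0) (hK : MeasurableSet K) (c : ℝ) :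
    volume ((fun x : ℝ => (x + c) / d) '' K) = (d : ENNReal)⁻¹ * volume K := by
  have hd' : (0 : ℝ) < d := by positivity
  have h := lintegral_image_eq_lintegral_abs_deriv_mul hK
    (fun x _ => hasDerivWithinAt_add_div (d := d) c x) (injOn_add_div hd c) 1
  simpa [ENNReal.ofReal_inv_of_pos hd'] using h

theorem setTransform_image_add_div (hd : d ≠ 0) (hK : MeasurableSet K) (c t : ℝ) :
    setTransform ((fun x : ℝ => (x + c) / d) '' K) t =
      (d : ℂ)⁻¹ * (𝐞 (t / d * c) * setTransform K (t / d)) := by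
  rw [setTransform, integral_image_eq_integral_abs_deriv_smul hK
    (fun x _ => hasDerivWithinAt_add_div (d := d) c x) (injOn_add_div hd c), setTransform,
    ← integral_const_mul, ← integral_const_mul]
  refine integral_congr_ae (.of_forall fun x => ?_)
  have h : t * ((x + c) / d) = t / d * c + t / d * x := by ring
  simp [h, AddChar.map_add_eq_mul]

/-- A set of finite measure that is the union of its `d` contracted copies is, up to null sets,
their disjoint union; at the level of Fourier transforms this is a refinement equation. -/
theorem setTransform_refinement (hd : d ≠ 0) {n : Fin d → ℤ} (hK : MeasurableSet K)
    (hfin : volume K ≠ ⊤) (hU : K = ⋃ i, (fun x : ℝ => (x + n i) / d) '' K) (t : ℝ) :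
    setTransform K t = digitMask d n (t / d) * setTransform K (t / d) := by
  have : IsFiniteMeasure (volume.restrict K) := isFiniteMeasure_restrict.2 hfin
  have hd' : (d : ENNReal) ≠ 0 := by exact_mod_cast hd
  have hle : volume.restrict K ≤
      ∑ i : Fin d, volume.restrict ((fun x : ℝ => (x + n i) / d) '' K) := by
    conv_lhs => rw [hU]
    exact Measure.restrict_iUnion_le.trans_eq (Measure.sum_fintype _)
  have huniv : (∑ i : Fin d, volume.restrict ((fun x : ℝ => (x + n i) / d) '' K)) Set.univ =
      volume K := by
    simp [volume_image_add_div hd hK, ← mul_assoc, ENNReal.mul_inv_cancel hd']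
  have : IsFiniteMeasure
      (∑ i : Fin d, volume.restrict ((fun x : ℝ => (x + n i) / d) '' K)) :=
    ⟨by rw [huniv]; exact hfin.lt_top⟩
  have heq := Measure.eq_of_le_of_measure_univ_eq hle (by rw [huniv]; simp)
  have hint : ∀ i : Fin d, Integrable (fun x : ℝ => (𝐞 (t * x) : ℂ))
      (volume.restrict ((fun x : ℝ => (x + n i) / d) '' K)) := fun i => by
    have : IsFiniteMeasure (volume.restrict ((fun x : ℝ => (x + n i) / d) '' K)) :=
      isFiniteMeasure_restrict.2 (by
        rw [volume_image_add_div hd hK]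
        exact ENNReal.mul_ne_top (by simpa using hd) hfin)
    refine Integrable.of_bound (C := 1) (by fun_prop) (.of_forall fun x => (Circle.norm_coe _).le)
  calc setTransform K t
      = ∫ x, (𝐞 (t * x) : ℂ)
          ∂(∑ i : Fin d, volume.restrict ((fun x : ℝ => (x + n i) / d) '' K)) := by
        rw [setTransform, heq]
    _ = ∑ i : Fin d, setTransform ((fun x : ℝ => (x + n i) / d) '' K) t :=
        integral_finsetSum_measure fun i _ => hint i
    _ = digitMask d n (t / d) * setTransform K (t / d) := by
        simp_rw [setTransform_image_add_div hd hK]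
        rw [← Finset.mul_sum, ← Finset.sum_mul, digitMask, mul_assoc]

end Contraction

theorem digitMask_intCast {d : ℕ} (hd : d ≠ 0) (n : Fin d → ℤ) (l : ℤ) :
    digitMask d n l = 1 := by
  have h : ∀ i, (𝐞 ((l : ℝ) * n i) : ℂ) = 1 := fun i => by
    rw [Real.fourierChar_apply, Complex.exp_eq_one_iff]
    exact ⟨l * n i, by push_cast; ring⟩
  have hd' : (d : ℂ) ≠ 0 := by exact_mod_cast hd
  simp [digitMask, h, hd']

theorem continuous_setTransform {K : Set ℝ} (hfin : volume K ≠ ⊤) :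
    Continuous (setTransform K) := by
  have : IsFiniteMeasure (volume.restrict K) := isFiniteMeasure_restrict.2 hfin
  refine continuous_of_dominated (bound := fun _ => 1) (fun t => by fun_prop)
    (fun t => .of_forall fun x => (Circle.norm_coe _).le) (integrable_const _) (.of_forall fun x => by fun_prop)

theorem setTransform_zero (K : Set ℝ) : setTransform K 0 = (volume.real K : ℂ) := by
  simp [setTransform]

theorem tendsto_setTransform_cocompact {K : Set ℝ} (hK : MeasurableSet K) :
    Tendsto (setTransform K) (cocompact ℝ) (𝓝 0) := by
  have h := (Real.tendsto_integral_exp_smul_cocompact (K.indicator fun _ => (1 : ℂ))).comp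
    (Homeomorph.neg ℝ).isClosedEmbedding.tendsto_cocompact
  refine h.congr fun t => ?_
  rw [setTransform, ← integral_indicator hK]
  refine integral_congr_ae (.of_forall fun x => ?_)
  by_cases hx : x ∈ K <;> simp [hx, Circle.smul_def, mul_comm]

/-- If the transform of `K` satisfies the refinement equation, then it vanishes at the nonzero
integers. -/
theorem setTransform_intCast_eq_zero {d : ℕ} (hd : 2 ≤ d) {n : Fin d → ℤ} {K : Set ℝ}
    (hK : MeasurableSet K)
    (href : ∀ t, setTransform K t = digitMask d n (t / d) * setTransform K (t / d))
    {l : ℤ} (hl : l ≠ 0) : setTransform K l = 0 := by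
  have hd' : (d : ℝ) ≠ 0 := by positivity
  have hconst : ∀ N : ℕ, setTransform K ((l : ℝ) * (d : ℝ) ^ N) = setTransform K l := by
    intro N
    induction N with
    | zero => simp
    | succ N ih =>
      have h1 : (l : ℝ) * (d : ℝ) ^ (N + 1) / d = (l : ℝ) * (d : ℝ) ^ N := by
        rw [pow_succ, ← mul_assoc, mul_div_assoc, div_self hd', mul_one]
      have h2 := digitMask_intCast (by omega) n (l * (d : ℤ) ^ N)
      push_cast at h2
      rw [href, h1, h2, one_mul, ih]
  have hl' : (0 : ℝ) < |(l : ℝ)| := by positivity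
  have hto : Tendsto (fun N : ℕ => (l : ℝ) * (d : ℝ) ^ N) atTop (cocompact ℝ) := by
    rw [← Metric.cobounded_eq_cocompact, ← tendsto_norm_atTop_iff_cobounded]
    simp only [norm_mul, norm_pow, Real.norm_eq_abs, Nat.abs_cast]
    exact (tendsto_pow_atTop_atTop_of_one_lt (by exact_mod_cast hd)).const_mul_atTop hl'
  have h := (tendsto_setTransform_cocompact hK).comp hto
  simp only [Function.comp_def, hconst] at h
  exact tendsto_nhds_unique tendsto_const_nhds h

theorem setTransform_eq_prod {d : ℕ} {n : Fin d → ℤ} {K : Set ℝ}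
    (href : ∀ t, setTransform K t = digitMask d n (t / d) * setTransform K (t / d))
    (t : ℝ) (k : ℕ) :
    setTransform K t =
      (∏ j : Fin k, digitMask d n (t / (d : ℝ) ^ ((j : ℕ) + 1))) *
        setTransform K (t / (d : ℝ) ^ k) := by
  induction k with
  | zero => simp
  | succ k ih =>
    rw [ih, href (t / (d : ℝ) ^ k), Fin.prod_univ_castSucc, div_div, ← pow_succ, mul_assoc]
    simp

theorem fourierChar_sum {ι : Type*} (s : Finset ι) (f : ι → ℝ) :
    (𝐞 (∑ i ∈ s, f i) : ℂ) = ∏ i ∈ s, (𝐞 (f i) : ℂ) := by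
  simp only [Real.fourierChar_apply, ← Complex.exp_sum, Finset.mul_sum, Complex.ofReal_sum,
    Finset.sum_mul]

section Bernoulli

variable {d : ℕ} {m : Measure (ℕ → Fin d)} [IsProbabilityMeasure m]

theorem integral_comp_initial_word
    (hm : ∀ (k : ℕ) (w : Fin k → Fin d),
      m {ω : ℕ → Fin d | ∀ j : Fin k, ω (j : ℕ) = w j} = (1 / (d : ENNReal)) ^ k)
    (k : ℕ) (g : (Fin k → Fin d) → ℂ) :
    ∫ ω, g (fun j => ω j) ∂m = ((d : ℂ)⁻¹) ^ k * ∑ w, g w := by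
  have hmeas : Measurable fun (ω : ℕ → Fin d) (j : Fin k) => ω j := by fun_prop
  have : IsProbabilityMeasure (m.map fun (ω : ℕ → Fin d) (j : Fin k) => ω j) :=
    Measure.isProbabilityMeasure_map hmeas.aemeasurable
  rw [← integral_map (f := g) hmeas.aemeasurable (by fun_prop), integral_fintype .of_finite,
    Finset.mul_sum]
  refine Finset.sum_congr rfl fun w _ => ?_
  have hset : (fun (ω : ℕ → Fin d) (j : Fin k) => ω j) ⁻¹' {w} =
      {ω : ℕ → Fin d | ∀ j : Fin k, ω (j : ℕ) = w j} := by
    ext ω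
    simp [funext_iff]
  rw [Measure.real, Measure.map_apply hmeas (measurableSet_singleton w), hset, hm]
  simp

theorem integral_fourierChar_partial_sum
    (hm : ∀ (k : ℕ) (w : Fin k → Fin d),
      m {ω : ℕ → Fin d | ∀ j : Fin k, ω (j : ℕ) = w j} = (1 / (d : ENNReal)) ^ k)
    (n : Fin d → ℤ) (t : ℝ) (k : ℕ) :
    ∫ ω, (𝐞 (t * ∑ j ∈ Finset.range k, (n (ω j) : ℝ) / (d : ℝ) ^ (j + 1)) : ℂ) ∂m =
      ∏ j : Fin k, digitMask d n (t / (d : ℝ) ^ ((j : ℕ) + 1)) := by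
  have h := integral_comp_initial_word hm k fun w =>
    ∏ j : Fin k, (𝐞 (t / (d : ℝ) ^ ((j : ℕ) + 1) * n (w j)) : ℂ)
  rw [← Fintype.prod_sum (f := fun (j : Fin k) (i : Fin d) =>
    (𝐞 (t / (d : ℝ) ^ ((j : ℕ) + 1) * n i) : ℂ))] at h
  simp only [digitMask, Finset.prod_mul_distrib, Finset.prod_const, Finset.card_univ,
    Fintype.card_fin]
  rw [← h]
  refine integral_congr_ae (.of_forall fun ω => ?_)
  have hsum : t * ∑ j ∈ Finset.range k, (n (ω j) : ℝ) / (d : ℝ) ^ (j + 1) =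
      ∑ j : Fin k, t / (d : ℝ) ^ ((j : ℕ) + 1) * n (ω j) := by
    rw [Finset.mul_sum, Finset.sum_range]
    exact Finset.sum_congr rfl fun j _ => by ring
  simp only [hsum, fourierChar_sum]

theorem tendsto_prod_digitMask (hd : 2 ≤ d)
    (hm : ∀ (k : ℕ) (w : Fin k → Fin d),
      m {ω : ℕ → Fin d | ∀ j : Fin k, ω (j : ℕ) = w j} = (1 / (d : ENNReal)) ^ k)
    (n : Fin d → ℤ) (t : ℝ) :
    Tendsto (fun k : ℕ => ∏ j : Fin k, digitMask d n (t / (d : ℝ) ^ ((j : ℕ) + 1))) atTop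
      (𝓝 (∫ ω, (𝐞 (t * digitSum d n ω) : ℂ) ∂m)) := by
  simp_rw [← integral_fourierChar_partial_sum hm n t]
  refine tendsto_integral_of_dominated_convergence (fun _ => 1) (fun k => ?_)
    (integrable_const _) (fun k => .of_forall fun ω => (Circle.norm_coe _).le) (.of_forall fun ω => ?_)
  · have hn : Measurable fun i : Fin d => (n i : ℝ) := measurable_of_finite _
    exact Measurable.aestronglyMeasurable (by fun_prop)
  · have hc : Continuous fun x : ℝ => (𝐞 (t * x) : ℂ) := by fun_prop
    exact (hc.tendsto _).comp (summable_digits hd n ω).hasSum.tendsto_sum_nat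

end Bernoulli

theorem volume_ne_zero_of_forall_exists_add_int {K : Set ℝ}
    (h : ∀ x : ℝ, ∃ z : ℤ, x + z ∈ K) : volume K ≠ 0 := by
  intro h0
  have hU : (Set.univ : Set ℝ) = ⋃ z : ℤ, (fun x : ℝ => x + z) ⁻¹' K := by
    ext x
    simpa using h x
  have : volume (Set.univ : Set ℝ) = 0 := by
    rw [hU]
    exact measure_iUnion_null fun z => by rw [measure_preimage_add_right, h0]
  simp at this

theorem fourier_coe_eq_fourierChar (l : ℤ) (x : ℝ) :
    fourier l (x : AddCircle (1 : ℝ)) = (𝐞 ((l : ℝ) * x) : ℂ) := by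
  rw [fourier_coe_apply, Real.fourierChar_apply]
  congr 1
  push_cast
  ring

/-- Finite measures on the circle with the same Fourier coefficients agree. -/
theorem AddCircle.measure_ext_of_integral_fourier {μ ν : Measure (AddCircle (1 : ℝ))}
    [IsFiniteMeasure μ] [IsFiniteMeasure ν]
    (h : ∀ l : ℤ, ∫ x, fourier l x ∂μ = ∫ x, fourier l x ∂ν) : μ = ν := by
  have hint : ∀ (ρ : Measure (AddCircle (1 : ℝ))) [IsFiniteMeasure ρ] (f : C(AddCircle (1 : ℝ), ℂ)),
      Integrable f ρ := fun ρ _ f =>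
    Integrable.of_bound (C := ‖f‖) f.continuous.aestronglyMeasurable
      (.of_forall fun x => f.norm_coe_le_norm x)
  have hcont : ∀ (ρ : Measure (AddCircle (1 : ℝ))) [IsFiniteMeasure ρ],
      Continuous fun f : C(AddCircle (1 : ℝ), ℂ) => ∫ x, f x ∂ρ := fun ρ _ => by
    refine (LipschitzWith.of_dist_le_mul (K := ⟨ρ.real Set.univ, measureReal_nonneg⟩)
      fun f g => ?_).continuous
    rw [dist_eq_norm, dist_eq_norm, ← integral_sub (hint ρ f) (hint ρ g), mul_comm]
    exact norm_integral_le_of_norm_le_const (.of_forall fun x => (f - g).norm_coe_le_norm x)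
  have key : ∀ f : C(AddCircle (1 : ℝ), ℂ), ∫ x, f x ∂μ = ∫ x, f x ∂ν := by
    intro f
    have hf : f ∈ closure (Submodule.span ℂ (Set.range (@fourier (1 : ℝ))) : Set _) := by
      rw [← Submodule.topologicalClosure_coe, span_fourier_closure_eq_top]
      trivial
    refine closure_minimal (fun g hg => ?_) (isClosed_eq (hcont μ) (hcont ν)) hf
    induction hg using Submodule.span_induction with
    | mem g hg =>
      obtain ⟨l, rfl⟩ := hg
      exact h l
    | zero => simp
    | add g₁ g₂ _ _ h₁ h₂ =>
      simp only [Set.mem_ofPred_eq, ContinuousMap.add_apply] at h₁ h₂ ⊢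
      rw [integral_add (hint μ g₁) (hint μ g₂), integral_add (hint ν g₁) (hint ν g₂), h₁, h₂]
    | smul c g _ hg =>
      simp only [Set.mem_ofPred_eq, ContinuousMap.smul_apply] at hg ⊢
      rw [integral_smul, integral_smul, hg]
  refine ext_of_forall_integral_eq_of_IsFiniteMeasure fun f => ?_
  have hf := key ⟨fun x => (f x : ℂ), by fun_prop⟩
  simp only [ContinuousMap.coe_mk, integral_complex_ofReal] at hf
  exact_mod_cast hf

theorem codingMap_eq_fourier (d : ℕ) (n : Fin d → ℤ) (ω : ℕ → Fin d) :
    codingMap d n ω = fourier 1 (digitSum d n ω : AddCircle (1 : ℝ)) := by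
  rw [fourier_coe_apply, codingMap, digitSum]
  simp

theorem integral_Ico_fourierChar {l : ℤ} (hl : l ≠ 0) :
    ∫ x in Set.Ico (0 : ℝ) 1, (𝐞 ((l : ℝ) * x) : ℂ) = 0 := by
  have hc : (2 * Real.pi * l * Complex.I : ℂ) ≠ 0 := by
    simp [hl, Real.pi_ne_zero]
  have h := integral_exp_mul_complex (a := 0) (b := 1) hc
  have h1 : Complex.exp (2 * Real.pi * l * Complex.I) = 1 :=
    Complex.exp_eq_one_iff.2 ⟨l, by ring⟩
  rw [intervalIntegral.integral_of_le zero_le_one, ← integral_Ico_eq_integral_Ioc] at h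
  simp only [Complex.ofReal_one, Complex.ofReal_zero, mul_one, mul_zero, h1, Complex.exp_zero,
    sub_self, zero_div] at h
  rw [← h]
  refine integral_congr_ae (.of_forall fun x => ?_)
  simp only [Real.fourierChar_apply]
  congr 1
  push_cast
  ring

theorem exists_add_int_mem_range_digitSum {d : ℕ} {n : Fin d → ℤ}
    (hsurj : Set.range (codingMap d n) = Metric.sphere (0 : ℂ) 1) (x : ℝ) :
    ∃ z : ℤ, x + z ∈ Set.range (digitSum d n) := by
  have hx : (𝐞 x : ℂ) ∈ Set.range (codingMap d n) := by
    rw [hsurj, mem_sphere_zero_iff_norm]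
    exact Circle.norm_coe _
  obtain ⟨ω, hω⟩ := hx
  rw [codingMap, Real.fourierChar_apply, Complex.exp_eq_exp_iff_exists_int] at hω
  obtain ⟨z, hz⟩ := hω
  refine ⟨z, ω, ?_⟩
  have hpi : (2 * Real.pi * Complex.I : ℂ) ≠ 0 := by simp [Real.pi_ne_zero]
  have h : ((digitSum d n ω : ℝ) : ℂ) = ((x + z : ℝ) : ℂ) := by
    refine mul_left_cancel₀ hpi (Eq.trans hz ?_)
    push_cast
    ring
  exact_mod_cast h

theorem integral_fourierChar_digitSum_eq_zero {d : ℕ} (hd : 2 ≤ d) {n : Fin d → ℤ}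
    {m : Measure (ℕ → Fin d)} [IsProbabilityMeasure m]
    (hm : ∀ (k : ℕ) (w : Fin k → Fin d),
      m {ω : ℕ → Fin d | ∀ j : Fin k, ω (j : ℕ) = w j} = (1 / (d : ENNReal)) ^ k)
    (hsurj : Set.range (codingMap d n) = Metric.sphere (0 : ℂ) 1) {l : ℤ} (hl : l ≠ 0) :
    ∫ ω, (𝐞 ((l : ℝ) * digitSum d n ω) : ℂ) ∂m = 0 := by
  have hcomp : IsCompact (Set.range (digitSum d n)) := isCompact_range (continuous_digitSum hd n)
  have hfin : volume (Set.range (digitSum d n)) ≠ ⊤ := hcomp.measure_ne_top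
  have hpos : volume (Set.range (digitSum d n)) ≠ 0 :=
    volume_ne_zero_of_forall_exists_add_int (exists_add_int_mem_range_digitSum hsurj)
  have href := setTransform_refinement (by omega) hcomp.measurableSet hfin
    (range_digitSum_eq_iUnion hd n)
  have hscale : Tendsto (fun k : ℕ => (l : ℝ) / (d : ℝ) ^ k) atTop (𝓝 0) :=
    tendsto_const_nhds.div_atTop (tendsto_pow_atTop_atTop_of_one_lt (by exact_mod_cast hd))
  have hlim := (tendsto_prod_digitMask hd hm n l).mul
    (((continuous_setTransform hfin).tendsto 0).comp hscale)
  simp only [Function.comp_def, ← setTransform_eq_prod href,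
    setTransform_intCast_eq_zero hd hcomp.measurableSet href hl] at hlim
  have h := tendsto_nhds_unique hlim tendsto_const_nhds
  rw [setTransform_zero] at h
  refine (mul_eq_zero.1 h).resolve_right ?_
  exact Complex.ofReal_ne_zero.2 ((measureReal_ne_zero_iff hfin).2 hpos)

/-- For `f(z) = z^d`: if the coding map `π` is surjective onto the unit circle,
then the pushforward under `π` of the uniform Bernoulli measure `m` on
`{1,…,d}^ℕ` (characterized by giving each cylinder of length `k` the mass
`(1/d)^k`) equals the Haar probability measure on the circle. -/
theorem map_bernoulli_eq_haar_of_surjective (d : ℕ) (hd : 2 ≤ d)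
    (n : Fin d → ℤ) (m : Measure (ℕ → Fin d)) [IsProbabilityMeasure m]
    (hm : ∀ (k : ℕ) (w : Fin k → Fin d),
      m {ω : ℕ → Fin d | ∀ j : Fin k, ω (j : ℕ) = w j} = (1 / (d : ENNReal)) ^ k)
    (hsurj : Set.range (codingMap d n) = Metric.sphere (0 : ℂ) 1) :
    Measure.map (codingMap d n) m = circleMeasure := by
  have hmk : Measurable fun x : ℝ => (x : AddCircle (1 : ℝ)) := AddCircle.measurable_mk'
  have hS : Measurable fun ω => (digitSum d n ω : AddCircle (1 : ℝ)) :=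
    hmk.comp (continuous_digitSum hd n).measurable
  have hF : Measurable fun x : AddCircle (1 : ℝ) => fourier 1 x := (fourier 1).continuous.measurable
  have hcircle : m.map (fun ω => (digitSum d n ω : AddCircle (1 : ℝ))) =
      (volume.restrict (Set.Ico (0 : ℝ) 1)).map fun x : ℝ => (x : AddCircle (1 : ℝ)) := by
    refine AddCircle.measure_ext_of_integral_fourier fun l => ?_
    rw [integral_map hS.aemeasurable (fourier l).continuous.aestronglyMeasurable,
      integral_map hmk.aemeasurable (fourier l).continuous.aestronglyMeasurable]
    simp only [fourier_coe_eq_fourierChar]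
    rcases eq_or_ne l 0 with rfl | hl
    · simp
    · rw [integral_fourierChar_digitSum_eq_zero hd hm hsurj hl, integral_Ico_fourierChar hl]
  have h := congrArg (Measure.map fun x : AddCircle (1 : ℝ) => fourier 1 x) hcircle
  rw [Measure.map_map hF hS, Measure.map_map hF hmk] at h
  convert h using 1
  · congr 1
    exact funext (codingMap_eq_fourier d n)
  · rw [circleMeasure]
    congr 1
    ext x
    rw [Function.comp_apply, fourier_coe_apply]
    simp
end

section
/- Let g_1(z) = ((1+i)/2)·z and g_2(z) = ((1−i)/2)·z + 1 + i on ℂ, and let K be the unique nonempty compact subset of ℂ with K = g_1(K) ∪ g_2(K) (the Lévy dragon). Then K has nonempty interior in ℂ. -/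
open MeasureTheory

open scoped Pointwise

/-- The lattice `2ℤ[i]`. -/
def evenGaussian : Set ℂ := {z | ∃ a b : ℤ, z = 2 * (a + b * Complex.I)}

/-- The union of the images of `K` under the group of the maps `z ↦ iᵏ z + l`, `l ∈ 2ℤ[i]`. -/
def orbitUnion (K : Set ℂ) : Set ℂ :=
  {z | ∃ (k : ℕ) (a b : ℤ), ∃ w ∈ K, z = Complex.I ^ k * w + 2 * (a + b * Complex.I)}

theorem isClosed_evenGaussian : IsClosed evenGaussian := by
  have hZ : IsClosed (Set.range ((↑) : ℤ → ℝ)) := Int.isClosedEmbedding_coe_real.isClosed_range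
  have heq : evenGaussian = (fun z : ℂ => z.re / 2) ⁻¹' Set.range ((↑) : ℤ → ℝ) ∩
      (fun z : ℂ => z.im / 2) ⁻¹' Set.range ((↑) : ℤ → ℝ) := by
    ext z
    constructor
    · rintro ⟨a, b, rfl⟩
      exact ⟨⟨a, by simp⟩, ⟨b, by simp⟩⟩
    · rintro ⟨⟨a, ha⟩, ⟨b, hb⟩⟩
      refine ⟨a, b, Complex.ext ?_ ?_⟩
      · simp only at ha
        simp [ha]
        ring
      · simp only at hb
        simp [hb]
        ring
  rw [heq]
  exact (hZ.preimage (by fun_prop)).inter (hZ.preimage (by fun_prop))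

theorem isClosed_orbitUnion {K : Set ℂ} (hc : IsCompact K) : IsClosed (orbitUnion K) := by
  have heq : orbitUnion K =
      ⋃ k : Fin 4, ((fun w : ℂ => Complex.I ^ (k : ℕ) * w) '' K + evenGaussian) := by
    ext z
    simp only [Set.mem_iUnion, Set.mem_add]
    constructor
    · rintro ⟨k, a, b, w, hw, rfl⟩
      exact ⟨⟨k % 4, Nat.mod_lt _ (by norm_num)⟩, _, ⟨w, hw, rfl⟩, _, ⟨a, b, rfl⟩,
        by simp [← Complex.I_pow_eq_pow_mod]⟩
    · rintro ⟨k, _, ⟨w, hw, rfl⟩, _, ⟨a, b, rfl⟩, rfl⟩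
      exact ⟨k, a, b, w, hw, rfl⟩
  rw [heq]
  exact isClosed_iUnion_of_finite fun k =>
    isClosed_evenGaussian.add_left_of_isCompact (hc.image (by fun_prop))

theorem exists_I_pow_eq_odd (k : ℕ) :
    ∃ c d : ℤ, Complex.I ^ k = c + d * Complex.I ∧ Odd (c + d) := by
  induction k with
  | zero => exact ⟨1, 0, by simp, by decide⟩
  | succ k ih =>
    obtain ⟨c, d, h, m, hm⟩ := ih
    refine ⟨-d, c, ?_, m - d, by linarith⟩
    rw [pow_succ, h]
    push_cast
    linear_combination (d : ℂ) * Complex.I_sq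

theorem exists_one_add_I_mul_eq {c d : ℤ} (h : Even (c + d)) :
    ∃ a b : ℤ, (1 + Complex.I) * (c + d * Complex.I) = 2 * (a + b * Complex.I) := by
  obtain ⟨m, hm⟩ := h
  obtain rfl : c = m + m - d := by linarith
  refine ⟨m - d, m, ?_⟩
  push_cast
  linear_combination (d : ℂ) * Complex.I_sq

/-- If `K` is mapped into itself by both branches of the Lévy system, then its orbit union is
mapped into itself by the first branch. -/
theorem mul_mem_orbitUnion {K : Set ℂ}
    (h₁ : ∀ w ∈ K, (1 + Complex.I) / 2 * w ∈ K)
    (h₂ : ∀ w ∈ K, (1 - Complex.I) / 2 * w + 1 + Complex.I ∈ K)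
    {z : ℂ} (hz : z ∈ orbitUnion K) : (1 + Complex.I) / 2 * z ∈ orbitUnion K := by
  obtain ⟨k, a, b, w, hw, rfl⟩ := hz
  rcases Int.even_or_odd (a + b) with hab | hab
  · obtain ⟨e, f, hef⟩ := exists_one_add_I_mul_eq hab
    refine ⟨k, e, f, _, h₁ w hw, ?_⟩
    linear_combination hef
  · obtain ⟨c, d, hcd, hodd⟩ := exists_I_pow_eq_odd (k + 1)
    have heven : Even ((a - c) + (b - d)) := by
      have := hab.sub_odd hodd
      rwa [add_sub_add_comm] at this
    obtain ⟨e, f, hef⟩ := exists_one_add_I_mul_eq heven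
    refine ⟨k + 1, e, f, _, h₂ w hw, ?_⟩
    push_cast at hef
    linear_combination hef - (1 + Complex.I) * hcd + Complex.I ^ k * w / 2 * Complex.I_sq

theorem exists_mem_orbitUnion_norm_sub_le {K : Set ℂ} (hne : K.Nonempty) (z : ℂ) :
    ∃ u ∈ orbitUnion K, ‖u - z‖ ≤ 2 := by
  obtain ⟨w, hw⟩ := hne
  refine ⟨_, ⟨0, round ((z - w).re / 2), round ((z - w).im / 2), w, hw, rfl⟩, ?_⟩
  refine (Complex.norm_le_abs_re_add_abs_im _).trans ?_
  have hre := abs_le.1 (abs_sub_round ((z - w).re / 2))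
  have him := abs_le.1 (abs_sub_round ((z - w).im / 2))
  have h₁ : |(Complex.I ^ 0 * w + 2 * ((round ((z - w).re / 2) : ℤ) +
      (round ((z - w).im / 2) : ℤ) * Complex.I) - z).re| ≤ 1 := by
    simp at hre ⊢
    rw [abs_le]
    constructor <;> linarith
  have h₂ : |(Complex.I ^ 0 * w + 2 * ((round ((z - w).re / 2) : ℤ) +
      (round ((z - w).im / 2) : ℤ) * Complex.I) - z).im| ≤ 1 := by
    simp at him ⊢
    rw [abs_le]
    constructor <;> linarith
  linarith

theorem norm_one_add_I_div_two_lt_one : ‖(1 + Complex.I) / 2‖ < 1 := by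
  rw [← sq_lt_one_iff₀ (norm_nonneg _), ← Complex.normSq_eq_norm_sq]
  simp [Complex.normSq_apply]
  norm_num

theorem orbitUnion_eq_univ {K : Set ℂ} (hne : K.Nonempty) (hc : IsCompact K)
    (h₁ : ∀ w ∈ K, (1 + Complex.I) / 2 * w ∈ K)
    (h₂ : ∀ w ∈ K, (1 - Complex.I) / 2 * w + 1 + Complex.I ∈ K) :
    orbitUnion K = Set.univ := by
  rw [← (isClosed_orbitUnion hc).closure_eq]
  refine Set.eq_univ_of_forall fun z => Metric.mem_closure_iff.2 fun ε hε => ?_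
  obtain ⟨n, hn⟩ := exists_pow_lt_of_lt_one (half_pos hε) norm_one_add_I_div_two_lt_one
  obtain ⟨u, hu, huz⟩ := exists_mem_orbitUnion_norm_sub_le hne ((1 - Complex.I) ^ n * z)
  have hmem : ∀ m : ℕ, ((1 + Complex.I) / 2) ^ m * u ∈ orbitUnion K := by
    intro m
    induction m with
    | zero => simpa using hu
    | succ m ih =>
      rw [pow_succ', mul_assoc]
      exact mul_mem_orbitUnion h₁ h₂ ih
  refine ⟨_, hmem n, ?_⟩
  have hinv : ((1 + Complex.I) / 2) ^ n * (1 - Complex.I) ^ n = 1 := by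
    rw [← mul_pow, show (1 + Complex.I) / 2 * (1 - Complex.I) = 1 by
      linear_combination -Complex.I_sq / 2, one_pow]
  have hdiff : ((1 + Complex.I) / 2) ^ n * u - z =
      ((1 + Complex.I) / 2) ^ n * (u - (1 - Complex.I) ^ n * z) := by
    linear_combination z * hinv
  rw [dist_comm, dist_eq_norm, hdiff, norm_mul, norm_pow]
  calc ‖(1 + Complex.I) / 2‖ ^ n * ‖u - (1 - Complex.I) ^ n * z‖
      ≤ ‖(1 + Complex.I) / 2‖ ^ n * 2 := by gcongr
    _ < ε := by linarith

/-- If the orbit union of a closed set is the whole plane, the set has nonempty interior, by the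
Baire category theorem. -/
theorem interior_nonempty_of_orbitUnion_eq_univ {K : Set ℂ} (hc : IsClosed K)
    (hU : orbitUnion K = Set.univ) : (interior K).Nonempty := by
  let T : ℕ × ℤ × ℤ → ℂ ≃ₜ ℂ := fun p =>
    (Homeomorph.mulLeft₀ (Complex.I ^ p.1) (pow_ne_zero _ Complex.I_ne_zero)).trans
      (Homeomorph.addRight (2 * (p.2.1 + p.2.2 * Complex.I)))
  have hcover : ⋃ p, T p '' K = Set.univ := by
    refine Set.eq_univ_of_forall fun z => ?_
    obtain ⟨k, a, b, w, hw, rfl⟩ := hU.ge (Set.mem_univ z)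
    exact Set.mem_iUnion.2 ⟨(k, a, b), w, hw, rfl⟩
  obtain ⟨p, hp⟩ := nonempty_interior_of_iUnion_of_closed
    (fun p => (T p).isClosed_image.2 hc) hcover
  rw [← (T p).image_interior] at hp
  exact hp.of_image

/-- The Lévy dragon, the attractor of `g₁(z) = ((1+i)/2)z`,
`g₂(z) = ((1-i)/2)z + 1 + i`, has nonempty interior in `ℂ`. -/
theorem levy_dragon_nonempty_interior (K : Set ℂ)
    (hne : K.Nonempty) (hc : IsCompact K)
    (hK : K = (fun z : ℂ => ((1 + Complex.I) / 2) * z) '' K ∪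
              (fun z : ℂ => ((1 - Complex.I) / 2) * z + 1 + Complex.I) '' K) :
    (interior K).Nonempty :=
  interior_nonempty_of_orbitUnion_eq_univ hc.isClosed <| orbitUnion_eq_univ hne hc
    (fun w hw => hK.ge (Or.inl ⟨w, hw, rfl⟩)) (fun w hw => hK.ge (Or.inr ⟨w, hw, rfl⟩))
end

section
/- Let g_1(z) = ((1+i)/2)·z and g_2(z) = ((1−i)/2)·z + 1 + i on ℂ, and let K be the unique nonempty compact subset of ℂ with K = g_1(K) ∪ g_2(K) (the Lévy dragon). Then the two-dimensional Lebesgue measure of K equals 1. -/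
open MeasureTheory

namespace LevyDragon

open Complex Set Filter Topology Pointwise

/-! ### The group of motions `z ↦ u z + b` with Gaussian integer coefficients

A motion is recorded as the pair of its coefficients `u` (a unit) and `b`. The motion
`τ z = -i z + 1` satisfies `(1 - i) J = J ∪ τ J` for the rescaled dragon `J`. -/

/-- The imaginary unit as a Gaussian integer. -/
def gaussI : GaussianInt := ⟨0, 1⟩

/-- The motion `h` such that the tile of `(u, b)` is one of the two pieces of `1 - i` times the
tile of `h`. -/
def parent (g : GaussianInt × GaussianInt) : GaussianInt × GaussianInt :=
  if (g.2.re + g.2.im) % 2 = 0 then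
    (g.1, ⟨(g.2.re - g.2.im) / 2, (g.2.re + g.2.im) / 2⟩)
  else
    (⟨-g.1.im, g.1.re⟩, ⟨(g.2.re + g.1.im - (g.2.im - g.1.re)) / 2,
      (g.2.re + g.1.im + (g.2.im - g.1.re)) / 2⟩)

/-- Left composition of a motion with `τ`. -/
def tauMul (g : GaussianInt × GaussianInt) : GaussianInt × GaussianInt :=
  (⟨g.1.im, -g.1.re⟩, ⟨g.2.im + 1, -g.2.re⟩)

/-- Whether at most `n` passages to the parent, each optionally preceded by `tauMul`, lead from
a motion to `τ` or to its inverse. -/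
def coalesces : ℕ → GaussianInt × GaussianInt → Bool
  | 0, g => g = (⟨0, -1⟩, ⟨1, 0⟩) || g = (⟨0, 1⟩, ⟨0, -1⟩)
  | n + 1, g => coalesces 0 g || coalesces n (parent g) || coalesces n (parent (tauMul g))

theorem coalesces_of_small :
    ∀ u ∈ ([⟨1, 0⟩, ⟨0, 1⟩, ⟨-1, 0⟩, ⟨0, -1⟩] : List GaussianInt),
      ∀ x ∈ ([-2, -1, 0, 1, 2] : List ℤ), ∀ y ∈ ([-2, -1, 0, 1, 2] : List ℤ),
        (u, (⟨x, y⟩ : GaussianInt)) = (⟨1, 0⟩, ⟨0, 0⟩) ∨ coalesces 8 (u, ⟨x, y⟩) = true := by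
  decide +kernel

theorem mem_units_of_norm_eq_one {u : GaussianInt} (hu : u.norm = 1) :
    u ∈ ([⟨1, 0⟩, ⟨0, 1⟩, ⟨-1, 0⟩, ⟨0, -1⟩] : List GaussianInt) := by
  obtain ⟨p, q⟩ := u
  simp only [Zsqrtd.norm_def] at hu
  have hp : p ≤ 1 := by nlinarith [mul_self_nonneg q]
  have hp' : -1 ≤ p := by nlinarith [mul_self_nonneg q]
  have hq : q ≤ 1 := by nlinarith
  have hq' : -1 ≤ q := by nlinarith
  interval_cases p <;> interval_cases q <;> simp_all

theorem odd_of_norm_eq_one {u : GaussianInt} (hu : u.norm = 1) : (u.re + u.im) % 2 = 1 := by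
  have h := mem_units_of_norm_eq_one hu
  simp only [List.mem_cons, List.not_mem_nil, or_false] at h
  rcases h with rfl | rfl | rfl | rfl <;> decide

theorem norm_parent {g : GaussianInt × GaussianInt} (hg : g.1.norm = 1) :
    (parent g).1.norm = 1 := by
  unfold parent
  split_ifs
  · exact hg
  · rw [Zsqrtd.norm_def] at *
    simp only
    linarith

theorem norm_tauMul {g : GaussianInt × GaussianInt} (hg : g.1.norm = 1) :
    (tauMul g).1.norm = 1 := by
  rw [Zsqrtd.norm_def] at *
  simp only [tauMul]
  linarith

theorem two_mul_norm_halves {a b : ℤ} (h : (a + b) % 2 = 0) :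
    2 * Zsqrtd.norm (⟨(a - b) / 2, (a + b) / 2⟩ : GaussianInt) = a ^ 2 + b ^ 2 := by
  obtain ⟨m, hm⟩ : ∃ m, a + b = 2 * m := ⟨(a + b) / 2, by omega⟩
  obtain rfl : a = 2 * m - b := by omega
  rw [show (2 * m - b - b) / 2 = m - b by omega, show (2 * m - b + b) / 2 = m by omega,
    Zsqrtd.norm_def]
  ring

theorem shifted_sq_lt {x y : ℤ} (h : 5 < x ^ 2 + y ^ 2) :
    0 < (x + 1) ^ 2 + y ^ 2 ∧ (x + 1) ^ 2 + y ^ 2 < 2 * (x ^ 2 + y ^ 2) := by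
  constructor
  · by_contra! h'
    have hx : x + 1 = 0 := by nlinarith [sq_nonneg (x + 1), sq_nonneg y]
    nlinarith
  · by_contra! h'
    have hx : x ≤ 2 := by nlinarith [sq_nonneg y]
    nlinarith

theorem norm_parent_snd_lt {u b : GaussianInt} (hu : u.norm = 1) (hb : 5 < b.norm) :
    0 < (parent (u, b)).2.norm ∧ (parent (u, b)).2.norm < b.norm := by
  have hodd := odd_of_norm_eq_one hu
  have h := mem_units_of_norm_eq_one hu
  obtain ⟨x, y⟩ := b
  have hN : Zsqrtd.norm (⟨x, y⟩ : GaussianInt) = x ^ 2 + y ^ 2 := by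
    rw [Zsqrtd.norm_def]; ring
  rw [hN] at hb ⊢
  unfold parent
  simp only
  split_ifs with hxy
  · have := two_mul_norm_halves hxy
    constructor <;> linarith
  · have e := two_mul_norm_halves (a := x + u.im) (b := y - u.re) (by omega)
    simp only [List.mem_cons, List.not_mem_nil, or_false] at h
    suffices 0 < (x + u.im) ^ 2 + (y - u.re) ^ 2 ∧
        (x + u.im) ^ 2 + (y - u.re) ^ 2 < 2 * (x ^ 2 + y ^ 2) by
      constructor <;> linarith
    rcases h with rfl | rfl | rfl | rfl
    · have := shifted_sq_lt (x := -y) (y := x) (by linarith)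
      constructor <;> linarith
    · have := shifted_sq_lt (x := x) (y := y) (by linarith)
      constructor <;> linarith
    · have := shifted_sq_lt (x := y) (y := x) (by linarith)
      constructor <;> linarith
    · have := shifted_sq_lt (x := -x) (y := y) (by linarith)
      constructor <;> linarith

/-- A family of motions that contains `τ` and its inverse and is stable under passage to the
pieces of a pair of tiles. -/
structure StableUnderSubdivision (Q : GaussianInt → GaussianInt → Prop) : Prop where
  tau : Q (-gaussI) 1
  tau_inv : Q gaussI (-gaussI)
  sub₁₁ : ∀ u c, Q u c → Q u ((1 - gaussI) * c)
  sub₁₂ : ∀ u c, Q u c → Q (-gaussI * u) (u + (1 - gaussI) * c)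
  sub₂₁ : ∀ u c, Q u c → Q (gaussI * u) (gaussI * ((1 - gaussI) * c) - gaussI)
  sub₂₂ : ∀ u c, Q u c → Q u (gaussI * (u + (1 - gaussI) * c) - gaussI)

namespace StableUnderSubdivision

variable {Q : GaussianInt → GaussianInt → Prop}

theorem of_parent (hQ : StableUnderSubdivision Q) {g : GaussianInt × GaussianInt}
    (hg : g.1.norm = 1) (h : Q (parent g).1 (parent g).2) : Q g.1 g.2 := by
  have hodd := odd_of_norm_eq_one hg
  obtain ⟨⟨p, q⟩, ⟨x, y⟩⟩ := g
  unfold parent at h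
  simp only at h hodd ⊢
  split_ifs at h with hxy
  · convert! hQ.sub₁₁ _ _ h using 1
    ext <;> simp [gaussI] <;> omega
  · convert! hQ.sub₁₂ _ _ h using 1 <;> ext <;> simp [gaussI] <;> omega

theorem of_parent_tauMul (hQ : StableUnderSubdivision Q) {g : GaussianInt × GaussianInt}
    (hg : g.1.norm = 1) (h : Q (parent (tauMul g)).1 (parent (tauMul g)).2) : Q g.1 g.2 := by
  have hodd := odd_of_norm_eq_one hg
  obtain ⟨⟨p, q⟩, ⟨x, y⟩⟩ := g
  unfold parent tauMul at h
  simp only at h hodd ⊢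
  split_ifs at h with hxy
  · convert! hQ.sub₂₁ _ _ h using 1 <;> ext <;> simp [gaussI] <;> omega
  · convert! hQ.sub₂₂ _ _ h using 1 <;> ext <;> simp [gaussI] <;> omega

theorem of_coalesces (hQ : StableUnderSubdivision Q) (n : ℕ) :
    ∀ g : GaussianInt × GaussianInt, g.1.norm = 1 → coalesces n g = true → Q g.1 g.2 := by
  have base : ∀ g : GaussianInt × GaussianInt, coalesces 0 g = true → Q g.1 g.2 := by
    intro g h
    simp only [coalesces, Bool.or_eq_true, decide_eq_true_eq] at h
    rcases h with rfl | rfl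
    · exact hQ.tau
    · exact hQ.tau_inv
  induction n with
  | zero => exact fun g _ h => base g h
  | succ n ih =>
    intro g hg h
    rw [coalesces, Bool.or_eq_true, Bool.or_eq_true] at h
    rcases h with (h | h) | h
    · exact base g h
    · exact hQ.of_parent hg (ih _ (norm_parent hg) h)
    · exact hQ.of_parent_tauMul hg (ih _ (norm_parent (norm_tauMul hg)) h)

/-- A stable family contains every motion other than the identity. -/
theorem of_ne_one (hQ : StableUnderSubdivision Q) {u b : GaussianInt} (hu : u.norm = 1)
    (hne : (u, b) ≠ (1, 0)) : Q u b := by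
  induction hn : b.norm.toNat using Nat.strong_induction_on generalizing u b with
  | _ n ih =>
  by_cases hsmall : b.norm ≤ 5
  · obtain ⟨x, y⟩ := b
    simp only [Zsqrtd.norm_def] at hsmall
    have hx : x ≤ 2 := by nlinarith [mul_self_nonneg y]
    have hx' : -2 ≤ x := by nlinarith [mul_self_nonneg y]
    have hy : y ≤ 2 := by nlinarith
    have hy' : -2 ≤ y := by nlinarith
    refine hQ.of_coalesces 8 (u, ⟨x, y⟩) hu
      ((coalesces_of_small u (mem_units_of_norm_eq_one hu) x ?_ y ?_).resolve_left hne)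
    · simp only [List.mem_cons, List.not_mem_nil, or_false]; omega
    · simp only [List.mem_cons, List.not_mem_nil, or_false]; omega
  · obtain ⟨hpos, hlt⟩ := norm_parent_snd_lt hu (not_le.1 hsmall)
    refine hQ.of_parent (g := (u, b)) hu
      (ih _ (by omega) (norm_parent (g := (u, b)) hu) (fun h => ?_) rfl)
    have h0 := (Prod.ext_iff.1 h).2
    simp only at h0
    simp [h0] at hpos

end StableUnderSubdivision

/-! ### Images under motions -/

theorem volume_image_mul_add (a b : ℂ) (s : Set ℂ) :
    volume ((fun z : ℂ => a * z + b) '' s) = ENNReal.ofReal (normSq a) * volume s := by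
  have h : (fun z : ℂ => a * z + b) '' s = (fun z => z + b) '' (Algebra.lmul ℝ ℂ a '' s) := by
    rw [image_image]; rfl
  rw [h, image_add_right, measure_preimage_add_right, Measure.addHaar_image_linearMap,
    ← Algebra.norm_apply, Algebra.norm_complex_apply, abs_of_nonneg (normSq_nonneg a)]

theorem aedisjoint_image_mul_add {s t : Set ℂ} (h : AEDisjoint volume s t) {a : ℂ} (ha : a ≠ 0)
    (b : ℂ) :
    AEDisjoint volume ((fun z : ℂ => a * z + b) '' s) ((fun z : ℂ => a * z + b) '' t) := by
  have hinj : Function.Injective fun z : ℂ => a * z + b := fun z w hzw =>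
    mul_left_cancel₀ ha (add_right_cancel hzw)
  rw [AEDisjoint, ← image_inter hinj, volume_image_mul_add, h.eq, mul_zero]

/-- The image of `J` under the motion `z ↦ u z + b`. -/
def tile (J : Set ℂ) (u b : GaussianInt) : Set ℂ := (fun z : ℂ => (u : ℂ) * z + b) '' J

@[simp]
theorem coe_gaussI : ((gaussI : GaussianInt) : ℂ) = I := by
  simp [gaussI, GaussianInt.toComplex_def]

/-- `J` is cut by `z ↦ (1 - i) z` into `J` and `τ J`. -/
def IsSelfSimilar (J : Set ℂ) : Prop :=
  (fun z : ℂ => (1 - I) * z) '' J = J ∪ (fun z : ℂ => -I * z + 1) '' J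

theorem one_sub_I_ne_zero : (1 - I : ℂ) ≠ 0 := by
  intro h
  simpa using congrArg re h

theorem IsSelfSimilar.aedisjoint {J : Set ℂ} (hJ : IsSelfSimilar J) (hc : IsCompact J) :
    AEDisjoint volume J ((fun z : ℂ => -I * z + 1) '' J) := by
  have hm : MeasurableSet ((fun z : ℂ => -I * z + 1) '' J) :=
    (hc.image (by fun_prop)).measurableSet
  have h := measure_union_add_inter (μ := volume) J hm
  have h₁ := volume_image_mul_add (1 - I) 0 J
  simp only [add_zero] at h₁
  rw [hJ] at h₁
  rw [h₁, volume_image_mul_add] at h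
  have h₂ : normSq (1 - I) = 2 := by simp [normSq_apply]; norm_num
  have hfin : volume J ≠ ⊤ := hc.measure_lt_top.ne
  rw [h₂, normSq_neg, normSq_I, ENNReal.ofReal_one, one_mul, ENNReal.ofReal_ofNat, two_mul] at h
  exact (ENNReal.add_right_inj (ENNReal.add_ne_top.2 ⟨hfin, hfin⟩)).1 (h.trans (add_zero _).symm)

theorem IsSelfSimilar.stable {J : Set ℂ} (hJ : IsSelfSimilar J) (hc : IsCompact J) :
    StableUnderSubdivision fun u b => AEDisjoint volume J (tile J u b) := by
  have hτ := hJ.aedisjoint hc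
  -- the four pairs of pieces of `(1 - i) J` and `(1 - i) (u J + c)`
  have split : ∀ u c : GaussianInt, AEDisjoint volume J (tile J u c) →
      AEDisjoint volume (J ∪ (fun z : ℂ => -I * z + 1) '' J)
        (tile J u ((1 - gaussI) * c) ∪ tile J (-gaussI * u) (u + (1 - gaussI) * c)) := by
    intro u c h
    have h' := aedisjoint_image_mul_add h one_sub_I_ne_zero 0
    simp only [add_zero] at h'
    have e : (fun z : ℂ => (1 - I) * z) '' tile J u c =
        (fun z : ℂ => (u : ℂ) * z + (1 - I) * c) '' ((fun z : ℂ => (1 - I) * z) '' J) := by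
      simp only [tile, image_image]
      congr 1; ext z; ring
    rw [e, hJ, image_union, image_image] at h'
    convert! h' using 2
    · simp [tile]
    · simp only [tile, map_mul, map_neg, map_add, map_sub, map_one, coe_gaussI]
      congr 1; ext z; ring
  have pull : ∀ u b : GaussianInt,
      AEDisjoint volume ((fun z : ℂ => -I * z + 1) '' J) (tile J u b) →
      AEDisjoint volume J (tile J (gaussI * u) (gaussI * b - gaussI)) := by
    intro u b h
    have h' := aedisjoint_image_mul_add h I_ne_zero (-I)
    simp only [tile, image_image] at h'
    convert! h' using 1
    · have e : (fun z : ℂ => I * (-I * z + 1) + -I) = id := by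
        funext z
        simp only [id]
        linear_combination (-z) * I_sq
      rw [e, image_id]
    · simp only [tile, map_mul, map_sub, coe_gaussI]
      congr 1; ext z; ring
  refine ⟨?_, ?_, fun u c h => ?_, fun u c h => ?_, fun u c h => ?_, fun u c h => ?_⟩
  · simpa [tile] using hτ
  · have h := pull 1 0 (by simpa [tile] using hτ.symm)
    simpa using h
  · exact (AEDisjoint.union_right_iff.1 (AEDisjoint.union_left_iff.1 (split u c h)).1).1
  · exact (AEDisjoint.union_right_iff.1 (AEDisjoint.union_left_iff.1 (split u c h)).1).2
  · exact pull _ _ (AEDisjoint.union_right_iff.1 (AEDisjoint.union_left_iff.1 (split u c h)).2).1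
  · have h' :=
      pull _ _ (AEDisjoint.union_right_iff.1 (AEDisjoint.union_left_iff.1 (split u c h)).2).2
    convert! h' using 2
    rw [← mul_assoc, show gaussI * -gaussI = 1 by decide, one_mul]

/-- Distinct motions have almost disjoint tiles. -/
theorem IsSelfSimilar.aedisjoint_tile {J : Set ℂ} (hJ : IsSelfSimilar J) (hc : IsCompact J)
    {u b u' b' : GaussianInt} (hu : u.norm = 1) (hu' : u'.norm = 1) (hne : (u, b) ≠ (u', b')) :
    AEDisjoint volume (tile J u b) (tile J u' b') := by
  have hmul : u * star u = 1 := by rw [← Zsqrtd.norm_eq_mul_conj, hu]; rfl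
  have hv : (star u * u').norm = 1 := by rw [Zsqrtd.norm_mul, Zsqrtd.norm_conj, hu, hu', one_mul]
  have h := (hJ.stable hc).of_ne_one (b := star u * (b' - b)) hv (fun h => hne ?_)
  · have hu0 : (u : ℂ) ≠ 0 := by
      rw [Ne, GaussianInt.toComplex_eq_zero]
      rintro rfl
      simp at hu
    have h' := aedisjoint_image_mul_add h hu0 b
    have hmul' : (u : ℂ) * (star u : GaussianInt) = 1 := by
      rw [← map_mul, hmul, map_one]
    convert! h' using 1
    simp only [tile, image_image, map_mul, map_sub]
    congr 1; ext z
    linear_combination (-(u' : ℂ) * z - b' + b) * hmul'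
  · obtain ⟨h₁, h₂⟩ := Prod.ext_iff.1 h
    simp only at h₁ h₂
    refine Prod.ext ?_ ?_
    · linear_combination u' * hmul - u * h₁
    · linear_combination (b' - b) * hmul - u * h₂

/-! ### The plane is covered -/

/-- The union of the four rotated copies of `J`. -/
def rosette (J : Set ℂ) : Set ℂ := ⋃ k : Fin 4, tile J (gaussI ^ (k : ℕ)) 0

/-- The union of all tiles. -/
def tiled (J : Set ℂ) : Set ℂ := ⋃ (k : ℕ) (b : GaussianInt), tile J (gaussI ^ k) b

theorem mem_tiled {J : Set ℂ} {z : ℂ} :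
    z ∈ tiled J ↔ ∃ (k : ℕ) (b : GaussianInt), ∃ w ∈ J, I ^ k * w + b = z := by
  simp [tiled, tile]

/-- The Gaussian integers as a lattice in the plane. -/
abbrev lattice : Submodule ℤ ℂ := Submodule.span ℤ (range basisOneI)

theorem mem_lattice {z : ℂ} : z ∈ lattice ↔ ∃ b : GaussianInt, (b : ℂ) = z := by
  rw [lattice, coe_basisOneI, Matrix.range_cons, Matrix.range_cons, Matrix.range_empty,
    union_empty, singleton_union, Submodule.mem_span_pair]
  constructor
  · rintro ⟨x, y, rfl⟩
    exact ⟨⟨x, y⟩, by simp [GaussianInt.toComplex_def]⟩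
  · rintro ⟨⟨x, y⟩, rfl⟩
    exact ⟨x, y, by simp [GaussianInt.toComplex_def]⟩

theorem isCompact_rosette {J : Set ℂ} (hc : IsCompact J) : IsCompact (rosette J) :=
  isCompact_iUnion fun _ => hc.image (by fun_prop)

theorem tiled_eq_lattice_add_rosette (J : Set ℂ) : tiled J = (lattice : Set ℂ) + rosette J := by
  ext z
  simp only [mem_tiled, Set.mem_add, SetLike.mem_coe, mem_lattice, rosette, tile, mem_iUnion, mem_image,
    map_pow, coe_gaussI, map_zero, add_zero]
  constructor
  · rintro ⟨k, b, w, hw, rfl⟩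
    refine ⟨b, ⟨b, rfl⟩, I ^ k * w, ⟨⟨k % 4, Nat.mod_lt _ (by norm_num)⟩, w, hw, ?_⟩, add_comm _ _⟩
    rw [I_pow_eq_pow_mod k]
  · rintro ⟨_, ⟨b, rfl⟩, _, ⟨k, w, hw, rfl⟩, rfl⟩
    exact ⟨k, b, w, hw, add_comm _ _⟩

theorem isClosed_tiled {J : Set ℂ} (hc : IsCompact J) : IsClosed (tiled J) := by
  rw [tiled_eq_lattice_add_rosette]
  have h : IsClosed (lattice.toAddSubgroup : Set ℂ) := AddSubgroup.isClosed_of_discrete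
  exact IsClosed.add_right_of_isCompact h (isCompact_rosette hc)

theorem norm_gaussI_pow (k : ℕ) : (gaussI ^ k).norm = 1 := by
  induction k with
  | zero => decide
  | succ k ih => rw [pow_succ, Zsqrtd.norm_mul, ih]; decide

theorem exists_eq_or_eq_add (k : ℕ) (b : GaussianInt) :
    ∃ c : GaussianInt, b = (1 - gaussI) * c ∨ b = gaussI ^ k + (1 - gaussI) * c := by
  have hodd := odd_of_norm_eq_one (norm_gaussI_pow k)
  generalize gaussI ^ k = u at *
  by_cases h : (b.re + b.im) % 2 = 0
  · refine ⟨⟨(b.re - b.im) / 2, (b.re + b.im) / 2⟩, Or.inl ?_⟩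
    ext <;> simp [gaussI] <;> omega
  · refine ⟨⟨(b.re - u.re - (b.im - u.im)) / 2, (b.re - u.re + (b.im - u.im)) / 2⟩, Or.inr ?_⟩
    ext <;> simp [gaussI] <;> omega

theorem IsSelfSimilar.div_mem_tiled {J : Set ℂ} (hJ : IsSelfSimilar J) {z : ℂ}
    (hz : z ∈ tiled J) : z / (1 - I) ∈ tiled J := by
  rw [mem_tiled] at hz ⊢
  obtain ⟨k, b, w, hw, rfl⟩ := hz
  obtain ⟨c, rfl | rfl⟩ := exists_eq_or_eq_add (k + 1) b
  · obtain ⟨v, hv, rfl⟩ : w ∈ (fun z : ℂ => (1 - I) * z) '' J := hJ ▸ Or.inl hw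
    refine ⟨k, c, v, hv, ?_⟩
    rw [eq_div_iff one_sub_I_ne_zero]
    simp
    ring
  · obtain ⟨v, hv, hvw⟩ : -I * w + 1 ∈ (fun z : ℂ => (1 - I) * z) '' J :=
      hJ ▸ Or.inr ⟨w, hw, rfl⟩
    refine ⟨k + 1, c, v, hv, ?_⟩
    rw [eq_div_iff one_sub_I_ne_zero]
    simp only [map_add, map_mul, map_pow, map_sub, map_one, coe_gaussI] at hvw ⊢
    linear_combination I ^ (k + 1) * hvw - I ^ k * w * I_sq

theorem exists_lattice_near (z : ℂ) : ∃ b : GaussianInt, ‖z - b‖ ≤ 2 := by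
  refine ⟨⟨round z.re, round z.im⟩, ?_⟩
  refine (norm_le_abs_re_add_abs_im _).trans ?_
  have h₁ := abs_sub_round z.re
  have h₂ := abs_sub_round z.im
  simp [GaussianInt.toComplex_def]
  linarith

theorem IsSelfSimilar.tiled_eq_univ {J : Set ℂ} (hJ : IsSelfSimilar J) (hc : IsCompact J)
    (hne : J.Nonempty) : tiled J = univ := by
  refine eq_univ_of_forall fun z => ?_
  obtain ⟨p, hp⟩ := hne
  have hdiv : ∀ (n : ℕ) (y : ℂ), y ∈ tiled J → y / (1 - I) ^ n ∈ tiled J := by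
    intro n y hy
    induction n with
    | zero => simpa using hy
    | succ n ih => rw [pow_succ, ← div_div]; exact hJ.div_mem_tiled ih
  choose b hb using fun n : ℕ => exists_lattice_near ((1 - I) ^ n * z - p)
  have hmem : ∀ n, (p + b n) / (1 - I) ^ n ∈ tiled J := fun n =>
    hdiv n _ (mem_tiled.2 ⟨0, b n, p, hp, by simp⟩)
  refine (isClosed_tiled hc).mem_of_tendsto (b := atTop) ?_ (Eventually.of_forall hmem)
  have hnorm : 1 < ‖(1 - I : ℂ)‖ := by
    rw [← one_lt_sq_iff₀ (norm_nonneg _), ← normSq_eq_norm_sq]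
    simp [normSq_apply]
  rw [tendsto_iff_norm_sub_tendsto_zero]
  have hlim : Tendsto (fun n : ℕ => 2 / ‖(1 - I : ℂ)‖ ^ n) atTop (𝓝 0) :=
    tendsto_const_nhds.div_atTop (tendsto_pow_atTop_atTop_of_one_lt hnorm)
  refine squeeze_zero (fun _ => norm_nonneg _) (fun n => ?_) hlim
  have hn : (1 - I : ℂ) ^ n ≠ 0 := pow_ne_zero _ one_sub_I_ne_zero
  rw [← norm_pow, show (p + b n) / (1 - I) ^ n - z =
    -(((1 - I) ^ n * z - p - b n) / (1 - I) ^ n) by field_simp; ring, norm_neg, norm_div]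
  gcongr
  exact hb n

/-! ### The measure -/

theorem gaussI_pow_injective : Function.Injective fun k : Fin 4 => gaussI ^ (k : ℕ) := by
  decide

theorem IsSelfSimilar.volume_rosette {J : Set ℂ} (hJ : IsSelfSimilar J) (hc : IsCompact J) :
    volume (rosette J) = 4 * volume J := by
  rw [rosette, measure_iUnion₀]
  · simp_rw [tile, volume_image_mul_add]
    simp
  · intro k l hkl
    exact hJ.aedisjoint_tile hc (norm_gaussI_pow _) (norm_gaussI_pow _)
      fun h => hkl (gaussI_pow_injective (congrArg Prod.fst h))
  · exact fun k => (hc.image (by fun_prop)).measurableSet.nullMeasurableSet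

theorem IsSelfSimilar.isAddFundamentalDomain_rosette {J : Set ℂ} (hJ : IsSelfSimilar J)
    (hc : IsCompact J) (hne : J.Nonempty) :
    IsAddFundamentalDomain lattice.toAddSubgroup (rosette J) volume where
  nullMeasurableSet := (isCompact_rosette hc).measurableSet.nullMeasurableSet
  ae_covers := by
    refine Eventually.of_forall fun z => ?_
    have hz : z ∈ (lattice : Set ℂ) + rosette J := by
      rw [← tiled_eq_lattice_add_rosette, hJ.tiled_eq_univ hc hne]
      trivial
    obtain ⟨b, hb, w, hw, rfl⟩ := hz
    refine ⟨-⟨b, hb⟩, ?_⟩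
    simpa [AddSubgroup.vadd_def] using hw
  aedisjoint := by
    have hvadd : ∀ (g : lattice.toAddSubgroup) (b : GaussianInt), (b : ℂ) = g →
        g +ᵥ rosette J = ⋃ k : Fin 4, tile J (gaussI ^ (k : ℕ)) b := by
      intro g b hb
      rw [rosette, vadd_set_iUnion]
      refine iUnion_congr fun k => ?_
      rw [← image_vadd, tile, tile, image_image]
      congr 1
      funext z
      simp [AddSubgroup.vadd_def, hb, add_comm]
    intro g g' hgg'
    obtain ⟨b, hb⟩ := mem_lattice.1 g.2
    obtain ⟨b', hb'⟩ := mem_lattice.1 g'.2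
    simp only [Function.onFun]
    rw [hvadd g b hb, hvadd g' b' hb', AEDisjoint.iUnion_left_iff]
    intro k
    rw [AEDisjoint.iUnion_right_iff]
    intro l
    refine hJ.aedisjoint_tile hc (norm_gaussI_pow _) (norm_gaussI_pow _) fun h => hgg' ?_
    rw [Prod.ext_iff] at h
    exact Subtype.ext (by rw [← hb, ← hb', show b = b' from h.2])

theorem volume_fundamentalDomain_basisOneI :
    volume (ZSpan.fundamentalDomain basisOneI) = 1 := by
  rw [measure_congr (ZSpan.fundamentalDomain_ae_parallelepiped basisOneI volume),
    ← toBasis_orthonormalBasisOneI]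
  simpa using orthonormalBasisOneI.volume_parallelepiped

theorem IsSelfSimilar.volume_rosette_eq_one {J : Set ℂ} (hJ : IsSelfSimilar J) (hc : IsCompact J)
    (hne : J.Nonempty) : volume (rosette J) = 1 := by
  rw [← volume_fundamentalDomain_basisOneI]
  have : Countable lattice.toAddSubgroup := inferInstanceAs (Countable lattice)
  exact (hJ.isAddFundamentalDomain_rosette hc hne).measure_eq
    (ZSpan.isAddFundamentalDomain' basisOneI volume)

/-- Half of the dragon is cut into two pieces by `z ↦ (1 - i) z`. -/
theorem isSelfSimilar_half {K : Set ℂ}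
    (hK : K = (fun z : ℂ => ((1 + I) / 2) * z) '' K ∪
      (fun z : ℂ => ((1 - I) / 2) * z + 1 + I) '' K) :
    IsSelfSimilar ((fun z : ℂ => 1 / 2 * z + 0) '' K) := by
  unfold IsSelfSimilar
  conv_lhs => rw [hK]
  simp only [image_union, image_image]
  congr 2 <;> funext z
  · linear_combination (-z / 4) * I_sq
  · linear_combination (z / 4 - 1 / 2) * I_sq

end LevyDragon

open LevyDragon in
/-- The Lévy dragon, the attractor of `g₁(z) = ((1+i)/2)z`,
`g₂(z) = ((1-i)/2)z + 1 + i`, has two-dimensional Lebesgue measure `1`. -/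
theorem levy_dragon_volume_eq_one (K : Set ℂ)
    (hne : K.Nonempty) (hc : IsCompact K)
    (hK : K = (fun z : ℂ => ((1 + Complex.I) / 2) * z) '' K ∪
              (fun z : ℂ => ((1 - Complex.I) / 2) * z + 1 + Complex.I) '' K) :
    volume K = 1 := by
  have hJ := isSelfSimilar_half hK
  have hcJ : IsCompact ((fun z : ℂ => 1 / 2 * z + 0) '' K) := hc.image (by fun_prop)
  have h := hJ.volume_rosette_eq_one hcJ (hne.image _)
  rw [hJ.volume_rosette hcJ, volume_image_mul_add, ← mul_assoc] at h
  have h4 : (4 : ENNReal) * ENNReal.ofReal (Complex.normSq (1 / 2)) = 1 := by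
    rw [show (4 : ENNReal) = ENNReal.ofReal 4 by simp, ← ENNReal.ofReal_mul (by norm_num)]
    norm_num [Complex.normSq_apply]
  rwa [h4, one_mul] at h
end

section
/- For any choice of μ_1, μ_2 ∈ {(1+i)/2, (1−i)/2, (−1+i)/2, (−1−i)/2} and β_1, β_2 ∈ (1+i)ℤ[i], with g_j(z) = μ_j·z + β_j on ℂ, the unique nonempty compact subset K of ℂ with K = g_1(K) ∪ g_2(K) has two-dimensional Lebesgue measure equal to a nonnegative integer. (Instance, for the Lattès map, of the Multiplicity Theorem, which gives μ_N(K) = n ∈ ℤ_{≥0}.) -/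
open MeasureTheory

open Set Function
open scoped Pointwise

/-- The affine map `z ↦ μ z + β` pushes Lebesgue measure on `ℂ` forward to `|μ|⁻²` times itself. -/
theorem Complex.map_mul_add_volume {μ : ℂ} (hμ : μ ≠ 0) (β : ℂ) :
    Measure.map (fun z : ℂ => μ * z + β) volume =
      ENNReal.ofReal (Complex.normSq μ)⁻¹ • (volume : Measure ℂ) := by
  have hdet : LinearMap.det (LinearMap.mulLeft ℝ μ) = Complex.normSq μ := by
    rw [← Algebra.norm_complex_apply, Algebra.norm_apply]; rfl
  have hdet0 : LinearMap.det (LinearMap.mulLeft ℝ μ) ≠ 0 := by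
    rwa [hdet, ne_eq, Complex.normSq_eq_zero]
  have hlin := Measure.map_linearMap_addHaar_eq_smul_addHaar (volume : Measure ℂ) hdet0
  rw [hdet, abs_of_nonneg (inv_nonneg.2 (Complex.normSq_nonneg μ))] at hlin
  replace hlin : Measure.map (fun z : ℂ => μ * z) volume =
      ENNReal.ofReal (Complex.normSq μ)⁻¹ • (volume : Measure ℂ) := hlin
  have hcomp : (fun z : ℂ => μ * z + β) = (fun z => z + β) ∘ fun z => μ * z := rfl
  rw [hcomp, ← Measure.map_map (by fun_prop) (by fun_prop), hlin, Measure.map_smul,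
    map_add_right_eq_self]

theorem Complex.map_mul_add_volume_restrict {μ : ℂ} (hμ : μ ≠ 0) (β : ℂ) (C : Set ℂ) :
    Measure.map (fun z : ℂ => μ * z + β) (volume.restrict C) =
      ENNReal.ofReal (Complex.normSq μ)⁻¹ •
        (volume : Measure ℂ).restrict ((fun z : ℂ => μ * z + β) '' C) := by
  have hinj : Injective (fun z : ℂ => μ * z + β) := fun x y hxy => by simpa [hμ] using hxy
  have hemb : MeasurableEmbedding (fun z : ℂ => μ * z + β) :=
    Continuous.measurableEmbedding (by fun_prop) hinj
  have h := hemb.restrict_map volume ((fun z : ℂ => μ * z + β) '' C)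
  rw [preimage_image_eq _ hinj, Complex.map_mul_add_volume hμ, Measure.restrict_smul] at h
  exact h.symm

/-- If `K` is the attractor of two affine maps that halve the area, then its two pieces are
almost disjoint, so that Lebesgue measure on `K` is a self-similar measure. -/
theorem volume_restrict_eq_of_eq_image_union {μ₁ μ₂ : ℂ} (hμ₁ : Complex.normSq μ₁ = 2⁻¹)
    (hμ₂ : Complex.normSq μ₂ = 2⁻¹) (β₁ β₂ : ℂ) {K : Set ℂ} (hc : IsCompact K)
    (hK : K = (fun z : ℂ => μ₁ * z + β₁) '' K ∪ (fun z : ℂ => μ₂ * z + β₂) '' K) :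
    volume.restrict K = (2⁻¹ : ENNReal) •
      (Measure.map (fun z : ℂ => μ₁ * z + β₁) (volume.restrict K) +
        Measure.map (fun z : ℂ => μ₂ * z + β₂) (volume.restrict K)) := by
  have piece : ∀ {μ : ℂ}, Complex.normSq μ = 2⁻¹ → ∀ β : ℂ,
      (2⁻¹ : ENNReal) • Measure.map (fun z : ℂ => μ * z + β) (volume.restrict K) =
        volume.restrict ((fun z : ℂ => μ * z + β) '' K) := by
    intro μ hμ β
    have hμ0 : μ ≠ 0 := by
      rintro rfl
      simp at hμ
    rw [Complex.map_mul_add_volume_restrict hμ0, hμ, inv_inv, smul_smul]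
    simp [ENNReal.inv_mul_cancel]
  have : IsFiniteMeasure (volume.restrict K) := ⟨by simpa using hc.measure_lt_top⟩
  refine Measure.eq_of_le_of_measure_univ_eq ?_ ?_
  · rw [smul_add, piece hμ₁, piece hμ₂]
    conv_lhs => rw [hK]
    exact Measure.restrict_union_le _ _
  · rw [Measure.smul_apply, Measure.add_apply, Measure.map_apply (by fun_prop) .univ,
      Measure.map_apply (by fun_prop) .univ, preimage_univ, preimage_univ, ← two_mul, smul_eq_mul,
      ← mul_assoc, ENNReal.inv_mul_cancel (by simp) (by simp), one_mul]

instance : Fact ((0 : ℝ) < 2) := ⟨two_pos⟩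

/-- The torus `ℂ / 2ℤ[i]`. -/
abbrev GaussTorus : Type := AddCircle (2 : ℝ) × AddCircle (2 : ℝ)

namespace GaussTorus

/-- The quotient map `ℂ → ℂ / 2ℤ[i]`. -/
def mk (z : ℂ) : GaussTorus := ((z.re : AddCircle (2 : ℝ)), (z.im : AddCircle (2 : ℝ)))

/-- Multiplication by `i` on `ℂ / 2ℤ[i]`. -/
def rot (x : GaussTorus) : GaussTorus := (-x.2, x.1)

/-- Multiplication by `1 + i` on `ℂ / 2ℤ[i]`. -/
def expand : GaussTorus →+ GaussTorus where
  toFun x := (x.1 - x.2, x.1 + x.2)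
  map_zero' := by simp
  map_add' x y := by
    ext
    · exact add_sub_add_comm _ _ _ _
    · exact add_add_add_comm _ _ _ _

/-- The translates by `2ℤ[i]` of the half-open square of side `2`. -/
def cell (p : ℤ × ℤ) : Set ℂ :=
  Ioc (2 * p.1 : ℝ) (2 * p.1 + 2) ×ℂ Ioc (2 * p.2 : ℝ) (2 * p.2 + 2)

theorem continuous_mk : Continuous mk :=
  ((AddCircle.continuous_mk' 2).comp Complex.continuous_re).prodMk
    ((AddCircle.continuous_mk' 2).comp Complex.continuous_im)

theorem continuous_rot : Continuous rot := by unfold rot; fun_prop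

theorem continuous_expand : Continuous expand := by
  change Continuous fun x : GaussTorus => (x.1 - x.2, x.1 + x.2)
  fun_prop

theorem mk_surjective : Surjective mk := by
  rintro ⟨x, y⟩
  obtain ⟨x, rfl⟩ := QuotientAddGroup.mk_surjective x
  obtain ⟨y, rfl⟩ := QuotientAddGroup.mk_surjective y
  exact ⟨⟨x, y⟩, rfl⟩

theorem expand_mk (z : ℂ) : expand (mk z) = mk ((1 + Complex.I) * z) := by
  simp [expand, mk, add_comm]

theorem rot_mk (z : ℂ) : rot (mk z) = mk (Complex.I * z) := by
  simp [rot, mk]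

theorem mk_add_two_mul (z : ℂ) (a b : ℤ) : mk (z + 2 * (a + b * Complex.I)) = mk z := by
  have h (n : ℤ) : ((2 * n : ℝ) : AddCircle (2 : ℝ)) = 0 :=
    (AddCircle.coe_eq_zero_iff 2).2 ⟨n, by simp [mul_comm]⟩
  simp [mk, h]

theorem rot_iterate_four : rot^[4] = id := by
  ext x <;> simp [rot]

theorem rot_expand (x : GaussTorus) : rot (expand x) = expand (rot x) := by
  obtain ⟨z, rfl⟩ := mk_surjective x
  rw [expand_mk, rot_mk, rot_mk, expand_mk, mul_left_comm]

theorem expand_surjective : Surjective expand := by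
  intro x
  obtain ⟨z, rfl⟩ := mk_surjective x
  refine ⟨mk ((1 + Complex.I)⁻¹ * z), ?_⟩
  rw [expand_mk, mul_inv_cancel_left₀]
  intro h
  simpa using congrArg Complex.re h

theorem expand_iterate_mk (n : ℕ) (z : ℂ) :
    expand^[n] (mk z) = mk ((1 + Complex.I) ^ n * z) := by
  induction n with
  | zero => simp
  | succ n ih => rw [iterate_succ_apply', ih, expand_mk, pow_succ', mul_assoc]

theorem dense_iUnion_expand_preimage_zero : Dense (⋃ n, expand^[n] ⁻¹' 0) := by
  have h0 : (1 + Complex.I : ℂ) ≠ 0 := fun h => by simpa using congrArg Complex.re h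
  have hdense : Dense {z : ℂ | ∃ n : ℕ, ∃ a b : ℤ,
      (1 + Complex.I) ^ n * z = 2 * (a + b * Complex.I)} := by
    refine Metric.dense_iff.2 fun z ε hε => ?_
    have hnorm : ‖(1 + Complex.I : ℂ)⁻¹‖ < 1 := by
      rw [norm_inv]
      refine inv_lt_one_of_one_lt₀ ?_
      rw [← sq_lt_sq₀ zero_le_one (norm_nonneg _), Complex.sq_norm]
      norm_num [Complex.normSq_apply]
    obtain ⟨n, hn⟩ := exists_pow_lt_of_lt_one (half_pos hε) hnorm
    set w : ℂ := (1 + Complex.I) ^ n * z / 2 with hw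
    set v : ℂ := round w.re + round w.im * Complex.I with hv
    have hwv : ‖v - w‖ ≤ 1 := by
      refine (Complex.norm_le_abs_re_add_abs_im _).trans ?_
      have h1 := abs_sub_round w.re
      have h2 := abs_sub_round w.im
      rw [abs_sub_comm] at h1 h2
      have hre : (v - w).re = round w.re - w.re := by simp [hv]
      have him : (v - w).im = round w.im - w.im := by simp [hv]
      rw [hre, him]
      linarith
    refine ⟨(1 + Complex.I)⁻¹ ^ n * (2 * v), ?_, n, round w.re, round w.im, ?_⟩
    · have hz : z = (1 + Complex.I)⁻¹ ^ n * (2 * w) := by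
        rw [hw, inv_pow]
        field_simp
      rw [Metric.mem_ball, dist_eq_norm]
      conv_lhs => rw [hz]
      rw [← mul_sub, ← mul_sub, norm_mul, norm_mul, norm_pow, Complex.norm_ofNat]
      have := pow_nonneg (norm_nonneg (1 + Complex.I : ℂ)⁻¹) n
      nlinarith
    · rw [inv_pow, mul_inv_cancel_left₀ (pow_ne_zero _ h0)]
  refine (mk_surjective.denseRange.dense_image continuous_mk hdense).mono ?_
  rintro _ ⟨z, ⟨n, a, b, h⟩, rfl⟩
  refine mem_iUnion.2 ⟨n, ?_⟩
  rw [mem_preimage, expand_iterate_mk, h, ← zero_add (2 * _), mk_add_two_mul]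
  simp [mk]

theorem ergodic_expand : Ergodic expand (volume : Measure GaussTorus) :=
  have : (volume : Measure GaussTorus).IsAddHaarMeasure :=
    Measure.prod.instIsAddHaarMeasure _ _
  expand.ergodic_of_dense_iUnion_preimage_zero dense_iUnion_expand_preimage_zero
    continuous_expand expand_surjective

theorem volume_univ : volume (univ : Set GaussTorus) = 4 := by
  rw [Measure.volume_eq_prod, ← univ_prod_univ, Measure.prod_prod, AddCircle.measure_univ,
    ← ENNReal.ofReal_mul zero_le_two]
  norm_num

theorem measurableSet_cell (p : ℤ × ℤ) : MeasurableSet (cell p) :=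
  (Complex.measurable_re measurableSet_Ioc).inter (Complex.measurable_im measurableSet_Ioc)

theorem measurePreserving_mk_cell (p : ℤ × ℤ) :
    MeasurePreserving mk (volume.restrict (cell p)) volume := by
  have h := (AddCircle.measurePreserving_mk 2 (2 * p.1)).prod
    (AddCircle.measurePreserving_mk 2 (2 * p.2))
  rw [Measure.prod_restrict] at h
  exact h.comp (Complex.volume_preserving_equiv_real_prod.restrict_preimage
    (measurableSet_Ioc.prod measurableSet_Ioc))

theorem pairwise_disjoint_cell : Pairwise (Disjoint on cell) := by
  intro p q hpq
  refine disjoint_left.2 fun z hp hq => hpq ?_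
  obtain ⟨⟨hp1, hp2⟩, hp3, hp4⟩ := hp
  obtain ⟨⟨hq1, hq2⟩, hq3, hq4⟩ := hq
  have aux {a b : ℤ} {x : ℝ} (h1 : 2 * (a : ℝ) < x) (h2 : x ≤ 2 * (b : ℝ) + 2) : a ≤ b := by
    have : (a : ℝ) < b + 1 := by linarith
    exact Int.lt_add_one_iff.1 (by exact_mod_cast this)
  exact Prod.ext (le_antisymm (aux hp1 hq2) (aux hq1 hp2)) (le_antisymm (aux hp3 hq4) (aux hq3 hp4))

theorem iUnion_cell : ⋃ p, cell p = univ := by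
  have aux (x : ℝ) : ∃ a : ℤ, x ∈ Ioc (2 * a : ℝ) (2 * a + 2) := by
    refine ⟨⌈x / 2⌉ - 1, ?_, ?_⟩ <;> push_cast
    · linarith [Int.ceil_lt_add_one (x / 2)]
    · linarith [Int.le_ceil (x / 2)]
  refine eq_univ_of_forall fun z => ?_
  obtain ⟨a, ha⟩ := aux z.re
  obtain ⟨b, hb⟩ := aux z.im
  exact mem_iUnion.2 ⟨(a, b), ha, hb⟩

theorem exists_measurable_section (p : ℤ × ℤ) :
    ∃ s : GaussTorus → ℂ, Measurable s ∧ ∀ z ∈ cell p, s (mk z) = z := by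
  let e (a : ℝ) (x : AddCircle (2 : ℝ)) : ℝ := AddCircle.measurableEquivIoc 2 a x
  have he (a : ℝ) : Measurable (e a) :=
    measurable_subtype_coe.comp (AddCircle.measurableEquivIoc 2 a).measurable
  have hee (a x : ℝ) (hx : x ∈ Ioc a (a + 2)) : e a x = x :=
    congrArg Subtype.val ((AddCircle.equivIoc 2 a).apply_symm_apply ⟨x, hx⟩)
  refine ⟨fun x => Complex.measurableEquivRealProd.symm (e (2 * p.1) x.1, e (2 * p.2) x.2),
    Complex.measurableEquivRealProd.symm.measurable.comp
      (((he _).comp measurable_fst).prodMk ((he _).comp measurable_snd)), ?_⟩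
  intro z hz
  exact Complex.ext (hee _ _ hz.1) (hee _ _ hz.2)

/-- The projection to the torus of Lebesgue measure on a measurable set is a countable sum of
restrictions of Haar measure. -/
theorem exists_map_mk_eq_sum {C : Set ℂ} (hC : MeasurableSet C) :
    ∃ S : ℤ × ℤ → Set GaussTorus, (∀ p, MeasurableSet (S p)) ∧
      Measure.map mk (volume.restrict C) = Measure.sum fun p => volume.restrict (S p) := by
  choose s hs hsmk using exists_measurable_section
  refine ⟨fun p => s p ⁻¹' C, fun p => hs p hC, ?_⟩
  have hsum : volume.restrict C = Measure.sum fun p => (volume.restrict (cell p)).restrict C := by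
    rw [← Measure.restrict_sum _ hC, ← Measure.restrict_iUnion pairwise_disjoint_cell
      measurableSet_cell, iUnion_cell, Measure.restrict_univ]
  rw [hsum, Measure.map_sum continuous_mk.measurable.aemeasurable]
  congr 1
  funext p
  rw [← ((measurePreserving_mk_cell p).restrict_preimage (hs p hC)).map_eq,
    Measure.restrict_restrict hC, Measure.restrict_restrict
      (continuous_mk.measurable (hs p hC))]
  congr 2
  ext z
  simp only [mem_inter_iff, mem_preimage]
  exact and_congr_left fun hz => by rw [hsmk p z hz]

theorem rot_iterate_mk (k : ℕ) (z : ℂ) : rot^[k] (mk z) = mk (Complex.I ^ k * z) := by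
  induction k with
  | zero => simp
  | succ k ih => rw [iterate_succ_apply', ih, rot_mk, pow_succ', mul_assoc]

theorem measurable_rot_iterate (k : ℕ) : Measurable rot^[k] :=
  (continuous_rot.iterate k).measurable

theorem map_rot_map_mk (k : ℕ) (C : Set ℂ) :
    Measure.map rot^[k] (Measure.map mk (volume.restrict C)) =
      Measure.map mk (volume.restrict ((fun z : ℂ => Complex.I ^ k * z) '' C)) := by
  have h := Complex.map_mul_add_volume_restrict (pow_ne_zero k Complex.I_ne_zero) 0 C
  simp only [add_zero, map_pow, Complex.normSq_I, one_pow, inv_one, ENNReal.ofReal_one,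
    one_smul] at h
  rw [← h, Measure.map_map (measurable_rot_iterate k) continuous_mk.measurable,
    Measure.map_map continuous_mk.measurable (by fun_prop)]
  exact congrArg (Measure.map · _) (funext (rot_iterate_mk k))

/-- The sum of the images of a measure on the torus under the rotations by powers of `i`. -/
noncomputable def rotSum (m : Measure GaussTorus) : Measure GaussTorus :=
  ∑ k : Fin 4, Measure.map rot^[k] m

theorem rotSum_map_rot (m : Measure GaussTorus) : rotSum (Measure.map rot m) = rotSum m := by
  have h (k : ℕ) : Measure.map rot^[k] (Measure.map rot m) = Measure.map rot^[k + 1] m := by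
    rw [Measure.map_map (measurable_rot_iterate k) continuous_rot.measurable, iterate_succ]
  simp only [rotSum, h]
  rw [Fin.sum_univ_eq_sum_range (fun k => Measure.map rot^[k + 1] m),
    Fin.sum_univ_eq_sum_range (fun k => Measure.map rot^[k] m), Finset.sum_range_succ,
    Finset.sum_range_succ' _ 3, rot_iterate_four, iterate_zero]

theorem rotSum_map_rot_iterate (k : ℕ) (m : Measure GaussTorus) :
    rotSum (Measure.map rot^[k] m) = rotSum m := by
  induction k with
  | zero => simp
  | succ k ih =>
    rw [iterate_succ', ← Measure.map_map continuous_rot.measurable (measurable_rot_iterate k),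
      rotSum_map_rot, ih]

theorem rotSum_add (m m' : Measure GaussTorus) : rotSum (m + m') = rotSum m + rotSum m' := by
  simp only [rotSum, Measure.map_add _ _ (measurable_rot_iterate _), Finset.sum_add_distrib]

theorem rotSum_smul (c : ENNReal) (m : Measure GaussTorus) : rotSum (c • m) = c • rotSum m := by
  simp only [rotSum, Measure.map_smul, Finset.smul_sum]

theorem map_expand_rotSum (m : Measure GaussTorus) :
    Measure.map expand (rotSum m) = rotSum (Measure.map expand m) := by
  have hcomm (k : ℕ) : expand ∘ rot^[k] = rot^[k] ∘ expand :=
    (Commute.iterate_right (f := expand) (g := rot) (fun x => (rot_expand x).symm) k).comp_eq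
  rw [rotSum, rotSum, Measure.map_finset_sum continuous_expand.aemeasurable]
  refine Finset.sum_congr rfl fun k _ => ?_
  rw [Measure.map_map continuous_expand.measurable (measurable_rot_iterate k),
    Measure.map_map (measurable_rot_iterate k) continuous_expand.measurable, hcomm]

theorem rotSum_apply_univ (m : Measure GaussTorus) : rotSum m univ = 4 * m univ := by
  simp [rotSum, Measure.map_apply (measurable_rot_iterate _) MeasurableSet.univ]

theorem exists_rotSum_map_mk_eq_sum {C : Set ℂ} (hC : IsCompact C) :
    ∃ S : Fin 4 × ℤ × ℤ → Set GaussTorus, (∀ p, MeasurableSet (S p)) ∧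
      rotSum (Measure.map mk (volume.restrict C)) =
        Measure.sum fun p => volume.restrict (S p) := by
  have hrot (k : Fin 4) : MeasurableSet ((fun z : ℂ => Complex.I ^ (k : ℕ) * z) '' C) :=
    (hC.image (by fun_prop)).measurableSet
  choose S hS hSsum using fun k => exists_map_mk_eq_sum (hrot k)
  refine ⟨fun p => S p.1 p.2, fun p => hS _ _, ?_⟩
  simp only [rotSum, map_rot_map_mk, hSsum]
  rw [← Measure.sum_fintype, Measure.sum_sum]

/-- The inverse of a lifted branch is multiplication by `1 + i`, up to a rotation of the torus. -/
theorem exists_expand_mk_eq_rot_iterate {μ β : ℂ}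
    (hμ : μ ∈ ({(1 + Complex.I) / 2, (1 - Complex.I) / 2,
      (-1 + Complex.I) / 2, (-1 - Complex.I) / 2} : Set ℂ))
    (hβ : ∃ a b : ℤ, β = (1 + Complex.I) * ((a : ℂ) + (b : ℂ) * Complex.I)) :
    ∃ k : ℕ, expand ∘ mk ∘ (fun z : ℂ => μ * z + β) = rot^[k] ∘ mk := by
  obtain ⟨a, b, rfl⟩ := hβ
  have hk : ∃ k : ℕ, (1 + Complex.I) * μ = Complex.I ^ k := by
    rcases hμ with rfl | rfl | rfl | rfl
    exacts [⟨1, by linear_combination Complex.I_sq / 2⟩,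
      ⟨0, by linear_combination -Complex.I_sq / 2⟩,
      ⟨2, by linear_combination -Complex.I_sq / 2⟩,
      ⟨3, by linear_combination (-1 / 2 - Complex.I) * Complex.I_sq⟩]
  obtain ⟨k, hk⟩ := hk
  refine ⟨k, funext fun z => ?_⟩
  simp only [comp_apply]
  rw [expand_mk, rot_iterate_mk, ← hk, ← mk_add_two_mul ((1 + Complex.I) * μ * z) (-b) a]
  congr 1
  push_cast
  linear_combination (a + b * Complex.I + 2 * b) * Complex.I_sq

end GaussTorus

/-- A finite constant multiple of a nonzero measure that is a countable sum of restrictions of that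
measure is an integer multiple. -/
theorem exists_nat_of_smul_eq_sum_restrict {α ι : Type*} [MeasurableSpace α] [Countable ι]
    {m : Measure α} [SigmaFinite m] [NeZero m] {S : ι → Set α} (hS : ∀ i, MeasurableSet (S i))
    {c : ENNReal} (hc : c ≠ ⊤) (h : c • m = Measure.sum fun i => m.restrict (S i)) :
    ∃ n : ℕ, c = n := by
  have hdens : m.withDensity (fun _ => c) =
      m.withDensity (∑' i, (S i).indicator (1 : α → ENNReal)) := by
    rw [withDensity_const, h, withDensity_tsum fun i => measurable_one.indicator (hS i)]
    simp_rw [withDensity_indicator_one (hS _)]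
  have hmeas : Measurable (∑' i, (S i).indicator (1 : α → ENNReal)) := by
    have : (∑' i, (S i).indicator (1 : α → ENNReal)) =
        fun x => ∑' i, (S i).indicator (1 : α → ENNReal) x := by
      ext x
      exact tsum_apply (Pi.summable.2 fun _ => ENNReal.summable)
    rw [this]
    exact Measurable.tsum fun i => measurable_one.indicator (hS i)
  have hae := (withDensity_eq_iff_of_sigmaFinite measurable_const.aemeasurable
    hmeas.aemeasurable).1 hdens
  obtain ⟨x, hx⟩ := hae.exists
  rw [tsum_apply (Pi.summable.2 fun _ => ENNReal.summable)] at hx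
  have hind : ∀ i, (S i).indicator (1 : α → ENNReal) x = {i | x ∈ S i}.indicator 1 i :=
    fun i => by by_cases hi : x ∈ S i <;> simp [hi]
  simp_rw [hind] at hx
  rw [← tsum_subtype] at hx
  simp only [Pi.one_apply, ENNReal.tsum_one] at hx
  cases hcard : ENat.card {i | x ∈ S i} with
  | top => simp_all
  | coe n => exact ⟨n, by rw [hx, hcard]; rfl⟩

open GaussTorus

/-- Instance of the Multiplicity Theorem for the Lattès map: for any
multipliers `μ₁, μ₂ ∈ {(1±i)/2, (-1±i)/2}` and translations
`β₁, β₂ ∈ (1+i)ℤ[i]`, the attractor of `gⱼ(z) = μⱼ z + βⱼ` has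
two-dimensional Lebesgue measure equal to a nonnegative integer. -/
theorem attractor_volume_integer (μ₁ μ₂ : ℂ)
    (hμ₁ : μ₁ ∈ ({(1 + Complex.I) / 2, (1 - Complex.I) / 2,
                  (-1 + Complex.I) / 2, (-1 - Complex.I) / 2} : Set ℂ))
    (hμ₂ : μ₂ ∈ ({(1 + Complex.I) / 2, (1 - Complex.I) / 2,
                  (-1 + Complex.I) / 2, (-1 - Complex.I) / 2} : Set ℂ))
    (β₁ β₂ : ℂ)
    (hβ₁ : ∃ a b : ℤ, β₁ = (1 + Complex.I) * ((a : ℂ) + (b : ℂ) * Complex.I))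
    (hβ₂ : ∃ a b : ℤ, β₂ = (1 + Complex.I) * ((a : ℂ) + (b : ℂ) * Complex.I))
    (K : Set ℂ) (hne : K.Nonempty) (hc : IsCompact K)
    (hK : K = (fun z : ℂ => μ₁ * z + β₁) '' K ∪
              (fun z : ℂ => μ₂ * z + β₂) '' K) :
    ∃ m : ℕ, volume K = (m : ENNReal) := by
  have hnorm : ∀ {μ : ℂ}, μ ∈ ({(1 + Complex.I) / 2, (1 - Complex.I) / 2,
      (-1 + Complex.I) / 2, (-1 - Complex.I) / 2} : Set ℂ) → Complex.normSq μ = 2⁻¹ := by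
    rintro μ (rfl | rfl | rfl | rfl) <;> rw [map_div₀] <;> norm_num [Complex.normSq_apply]
  have hself := volume_restrict_eq_of_eq_image_union (hnorm hμ₁) (hnorm hμ₂) β₁ β₂ hc hK
  obtain ⟨k₁, hk₁⟩ := exists_expand_mk_eq_rot_iterate hμ₁ hβ₁
  obtain ⟨k₂, hk₂⟩ := exists_expand_mk_eq_rot_iterate hμ₂ hβ₂
  have hmk := continuous_mk.measurable
  have hex := continuous_expand.measurable
  set ν := Measure.map mk (volume.restrict K) with hν
  have hνuniv : rotSum ν univ = 4 * volume K := by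
    rw [rotSum_apply_univ, hν, Measure.map_apply hmk .univ, preimage_univ,
      Measure.restrict_apply_univ]
  have hinv : MeasurePreserving expand (rotSum ν) (rotSum ν) := by
    refine ⟨hex, ?_⟩
    have hexν : Measure.map expand ν =
        (2⁻¹ : ENNReal) • (Measure.map rot^[k₁] ν + Measure.map rot^[k₂] ν) := by
      rw [hν, Measure.map_map hex hmk, Measure.map_map (measurable_rot_iterate _) hmk,
        Measure.map_map (measurable_rot_iterate _) hmk, ← hk₁, ← hk₂]
      conv_lhs => rw [hself]
      rw [Measure.map_smul, Measure.map_add _ _ (hex.comp hmk),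
        Measure.map_map (hex.comp hmk) (by fun_prop), Measure.map_map (hex.comp hmk) (by fun_prop)]
      rfl
    rw [map_expand_rotSum, hexν, rotSum_smul, rotSum_add, rotSum_map_rot_iterate,
      rotSum_map_rot_iterate, ← two_smul ENNReal, smul_smul,
      ENNReal.inv_mul_cancel (by simp) (by simp), one_smul]
  have : IsFiniteMeasure (rotSum ν) :=
    ⟨by rw [hνuniv]; exact ENNReal.mul_lt_top (by simp) hc.measure_lt_top⟩
  obtain ⟨S, hS, hSsum⟩ := exists_rotSum_map_mk_eq_sum hc
  obtain ⟨c, hcν⟩ := ergodic_expand.eq_smul_of_absolutelyContinuous hinv (by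
    rw [hSsum]
    exact Measure.absolutelyContinuous_sum_left fun p =>
      Measure.restrict_le_self.absolutelyContinuous)
  have hvol : volume K = c := by
    rw [hcν, Measure.smul_apply, GaussTorus.volume_univ, smul_eq_mul, mul_comm] at hνuniv
    exact ((ENNReal.mul_right_inj (by simp) (by simp)).1 hνuniv).symm
  have : NeZero (volume : Measure GaussTorus) :=
    ⟨fun h => by simpa [h] using GaussTorus.volume_univ⟩
  rw [hvol]
  exact exists_nat_of_smul_eq_sum_restrict hS (hvol ▸ hc.measure_ne_top) (hcν ▸ hSsum)
end
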